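/- arXiv:0805.0670 — 5 statements merged into one kernel-verified Lean document; each statement's English description precedes it below -/
import Mathlib

section
/- Let 0 ≤ m ≤ n and 1 ≤ q ≤ n−m. For every f ∈ M^{n−m,m} one has d(R_q f) = R_q(d f) + (n−2m−q+1)·R_{q−1} f, as functions on (m+q−1)-element subsets of {1,…,n}. -/
/-!
Let `|B| = m + q - 1`. For `x ∉ B`, an `m`-subset of `B ∪ {x}` is either an `m`-subset of `B` or
`A ∪ {x}` with `A` an `(m-1)`-subset of `B` (`sum_powersetCard_insert`). Hence `d (R_q f) (B)` is
`(n - |B|) ∑_{A ⊆ B, |A| = m} f A` plus the sum of `f (A ∪ {x})` over `(m-1)`-subsets `A ⊆ B` and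
`x ∉ B`. In `R_q (d f) (B)` the point `x` runs over the complement of `A` instead; the extra terms,
those with `x ∈ B ∖ A`, count every `m`-subset of `B` exactly `m` times
(`sum_powersetCard_sdiff`). The difference has coefficient `n - |B| - m = n - 2m - q + 1`.
For `m = 0` there are no `(m-1)`-subsets and `R_q (d f) (B) = 0`.
-/

open Finset

noncomputable section

/-- The Radon transform `d : M^{n-m,m} → M^{n-m+1,m-1}`, `(df)(B) = ∑_{x ∉ B} f(B ∪ {x})`. -/
def dR (n : ℕ) (f : Finset (Fin n) → ℂ) : Finset (Fin n) → ℂ :=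
  fun B => ∑ x ∈ Bᶜ, f (insert x B)

/-- The adjoint Radon transform `d* : M^{n-m,m} → M^{n-m-1,m+1}`. -/
def dS (n : ℕ) (f : Finset (Fin n) → ℂ) : Finset (Fin n) → ℂ :=
  fun B => ∑ x ∈ B, f (B.erase x)

/-- `R_q = (d*)^q / q!`, i.e. `(R_q f)(B) = ∑_{A ⊆ B, |A| = |B| - q} f(A)`. -/
def RT (n q : ℕ) (f : Finset (Fin n) → ℂ) : Finset (Fin n) → ℂ :=
  fun B => if q ≤ B.card then ∑ A ∈ B.powersetCard (B.card - q), f A else 0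

/-- Pochhammer symbol `(t)_p = t(t+1)⋯(t+p-1)`. -/
def poch (t : ℤ) (p : ℕ) : ℤ := ∏ i ∈ Finset.range p, (t + i)

/-- Dunkl-normalized Hahn polynomial value `E_m(a,b,c,x)`. -/
def hahnE (m : ℕ) (a b c x : ℤ) : ℤ :=
  ∑ j ∈ Finset.Icc (max 0 (x - c + m)) (min (m : ℤ) x),
    (-1) ^ j.toNat * (m.choose j.toNat : ℤ) * poch (b - m + 1) j.toNat * poch (-x) j.toNat *
      poch (a - m + 1) (m - j.toNat) * poch (x - c) (m - j.toNat)

/-- Inner product `⟨f, g⟩ = ∑ f(s) conj (g s)`. -/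
def ip (n : ℕ) (f g : Finset (Fin n) → ℂ) : ℂ :=
  ∑ s : Finset (Fin n), f s * (starRingEnd ℂ) (g s)

/-- Action of `S_n`: `(g · f)(ω) = f (g⁻¹ ω)`. -/
def permAct (n : ℕ) (g : Equiv.Perm (Fin n)) (f : Finset (Fin n) → ℂ) :
    Finset (Fin n) → ℂ :=
  fun s => f (s.image ⇑g⁻¹)

/-- The block `{o+1, …, o+a}` of the ground set `{1, …, n}` (0-indexed: positions `o ≤ x < o+a`). -/
def block (n o a : ℕ) : Finset (Fin n) :=
  Finset.filter (fun x => o ≤ (x : ℕ) ∧ (x : ℕ) < o + a) Finset.univ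

/-- Tensor product relative to the partition `A = {1,…,h}`, `B = {h+1,…,n}`:
`(φ ⊗ ψ)(Z) = φ(Z ∩ A) · ψ(Z ∩ B)`. -/
def tens (n h : ℕ) (φ ψ : Finset (Fin n) → ℂ) : Finset (Fin n) → ℂ :=
  fun Z => φ (Z ∩ block n 0 h) * ψ (Z ∩ block n h (n - h))

theorem sum_powersetCard_insert {n : ℕ} (f : Finset (Fin n) → ℂ) (B : Finset (Fin n))
    (x : Fin n) (hx : x ∉ B) (k : ℕ) :
    ∑ A ∈ (insert x B).powersetCard (k + 1), f A =
      ∑ A ∈ B.powersetCard (k + 1), f A + ∑ A ∈ B.powersetCard k, f (insert x A) := by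
  have hmem : ∀ {j : ℕ} {A : Finset (Fin n)}, A ∈ B.powersetCard j → x ∉ A :=
    fun hA h => hx ((mem_powersetCard.1 hA).1 h)
  rw [powersetCard_succ_insert hx, sum_union, sum_image]
  · intro A hA A' hA' h
    rw [← erase_insert (hmem hA), ← erase_insert (hmem hA'), h]
  · rw [disjoint_left]
    intro A hA hA'
    obtain ⟨C, -, rfl⟩ := mem_image.1 hA'
    exact hmem hA (mem_insert_self x C)

/-- Double counting of the pairs `(A, x)` with `A ∪ {x}` a given `(k+1)`-subset of `B`. -/
theorem sum_powersetCard_sdiff {n : ℕ} (f : Finset (Fin n) → ℂ) (B : Finset (Fin n)) (k : ℕ) :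
    ∑ A ∈ B.powersetCard k, ∑ x ∈ B \ A, f (insert x A) =
      ((k : ℂ) + 1) * ∑ A ∈ B.powersetCard (k + 1), f A := by
  have h : ((k : ℂ) + 1) * ∑ A ∈ B.powersetCard (k + 1), f A =
      ∑ A ∈ B.powersetCard (k + 1), ∑ _x ∈ A, f A := by
    rw [mul_sum]
    refine sum_congr rfl fun A hA => ?_
    rw [sum_const, (mem_powersetCard.1 hA).2, nsmul_eq_mul]
    push_cast
    rfl
  rw [h, sum_sigma', sum_sigma']
  refine sum_bij' (fun p _ => ⟨insert p.2 p.1, p.2⟩) (fun p _ => ⟨p.1.erase p.2, p.2⟩)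
    ?_ ?_ ?_ ?_ ?_
  · rintro ⟨A, x⟩ hp
    simp only [mem_sigma, mem_powersetCard, mem_sdiff] at hp ⊢
    obtain ⟨⟨hAB, hc⟩, hxB, hxA⟩ := hp
    exact ⟨⟨insert_subset hxB hAB, by rw [card_insert_of_notMem hxA, hc]⟩, mem_insert_self _ _⟩
  · rintro ⟨A, x⟩ hp
    simp only [mem_sigma, mem_powersetCard, mem_sdiff] at hp ⊢
    obtain ⟨⟨hAB, hc⟩, hxA⟩ := hp
    exact ⟨⟨(erase_subset _ _).trans hAB, by rw [card_erase_of_mem hxA, hc]; rfl⟩,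
      hAB hxA, notMem_erase _ _⟩
  · rintro ⟨A, x⟩ hp
    simp only [mem_sigma, mem_sdiff] at hp
    simp [erase_insert hp.2.2]
  · rintro ⟨A, x⟩ hp
    simp only [mem_sigma] at hp
    simp [insert_erase hp.2]
  · rintro ⟨A, x⟩ hp
    rfl

/-- Lemma 2.1(1): for `f ∈ M^{n-m,m}` and `1 ≤ q ≤ n-m`,
`d R_q f = R_q d f + (n - 2m - q + 1) R_{q-1} f` as functions on `(m+q-1)`-subsets. -/
theorem stmt0 (n m q : ℕ) (hn : 1 ≤ n) (hm : m ≤ n) (hq1 : 1 ≤ q) (hq2 : q ≤ n - m)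
    (f : Finset (Fin n) → ℂ) (hf : ∀ s : Finset (Fin n), s.card ≠ m → f s = 0)
    (B : Finset (Fin n)) (hB : B.card = m + q - 1) :
    dR n (RT n q f) B =
      RT n q (dR n f) B + ((n : ℂ) - 2 * m - q + 1) * RT n (q - 1) f B := by
  have hcompl : ((Bᶜ.card : ℕ) : ℂ) = (n : ℂ) - m - q + 1 := by
    have h : Bᶜ.card + m + q = n + 1 := by
      have := card_add_card_compl B
      rw [Fintype.card_fin] at this
      omega
    have h' : ((Bᶜ.card : ℕ) : ℂ) + m + q = n + 1 := by exact_mod_cast h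
    linear_combination h'
  have hL : dR n (RT n q f) B = ∑ x ∈ Bᶜ, ∑ A ∈ (insert x B).powersetCard m, f A := by
    refine sum_congr rfl fun x hx => ?_
    have hc : (insert x B).card = m + q := by
      rw [card_insert_of_notMem (mem_compl.1 hx), hB]
      omega
    simp only [RT]
    rw [hc, if_pos (by omega), Nat.add_sub_cancel]
  have hR : RT n (q - 1) f B = ∑ A ∈ B.powersetCard m, f A := by
    simp only [RT]
    rw [if_pos (by omega), show B.card - (q - 1) = m by omega]
  rw [hL, hR]
  rcases m with _ | k
  · have h0 : RT n q (dR n f) B = 0 := by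
      simp only [RT]
      rw [if_neg (by omega)]
    simp only [powersetCard_zero, sum_singleton, sum_const, nsmul_eq_mul, h0, hcompl]
    push_cast
    ring
  · have hM : RT n q (dR n f) B = ∑ A ∈ B.powersetCard k, ∑ x ∈ Aᶜ, f (insert x A) := by
      simp only [RT, dR]
      rw [if_pos (by omega), show B.card - q = k by omega]
    have hsplit : ∀ A ∈ B.powersetCard k, ∑ x ∈ Aᶜ, f (insert x A) =
        ∑ x ∈ B \ A, f (insert x A) + ∑ x ∈ Bᶜ, f (insert x A) := by
      intro A hA
      have hAB := (mem_powersetCard.1 hA).1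
      rw [← sum_union]
      · congr 1
        ext x
        have := @hAB x
        simp only [mem_compl, mem_union, mem_sdiff]
        tauto
      · rw [disjoint_left]
        intro x hx hx'
        exact mem_compl.1 hx' (mem_sdiff.1 hx).1
    rw [hM, sum_congr rfl hsplit, sum_add_distrib, sum_powersetCard_sdiff,
      sum_congr rfl fun x hx => sum_powersetCard_insert f B x (mem_compl.1 hx) k,
      sum_add_distrib, sum_const, nsmul_eq_mul, hcompl, sum_comm]
    push_cast
    ring
end
end

section
/- Let 0 ≤ m ≤ n and 1 ≤ p ≤ q ≤ n−m. If f ∈ M^{n−m,m} satisfies d f = 0, then d^p(R_q f) = (n−2m−q+1)_p · R_{q−p} f. -/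
/-!
Since `f` is supported on `m`-sets, `(R_q f)(B)` is the sum of `f` over all subsets of `B` when
`|B| = m + q`, and `0` otherwise (`RT_eq`). The case `p = 1` (`dR_RT`) carries the proof. For
`|B| = m + q` split the subsets of `B ∪ {x}` by whether they contain `x`:
`(d R_{q+1} f)(B) = ∑_{x ∉ B} ∑_{A ⊆ B} f(A) + ∑_{A ⊆ B} ∑_{x ∉ B} f(A ∪ {x})`.
The first term is `(n - |B|) (R_q f)(B)`. As `d f = 0`, the second is
`- ∑_{A ⊆ B} ∑_{x ∈ B ∖ A} f(A ∪ {x})`, in which every `A' ⊆ B` is counted `|A'|` times, so it is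
`- m (R_q f)(B)`. Hence `d R_{q+1} f = (n - 2m - q) R_q f`, and iterating gives the Pochhammer
factor.
-/

open Finset

noncomputable section

/-- For `f` supported on `m`-sets, `R_q f` is supported on `(m + q)`-sets, where the cardinality
restriction on the summation index is automatic. -/
lemma RT_eq {n m : ℕ} (q : ℕ) {f : Finset (Fin n) → ℂ}
    (hf : ∀ s : Finset (Fin n), s.card ≠ m → f s = 0) (B : Finset (Fin n)) :
    RT n q f B = if B.card = m + q then ∑ A ∈ B.powerset, f A else 0 := by
  unfold RT
  by_cases h : B.card = m + q
  · rw [if_pos (by omega), if_pos h]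
    have hc : B.card - q = m := by omega
    rw [hc]
    refine Finset.sum_subset (fun A hA => ?_) fun A hA hA' => hf A fun hAm => hA' ?_
    · exact Finset.mem_powerset.2 (Finset.mem_powersetCard.1 hA).1
    · exact Finset.mem_powersetCard.2 ⟨Finset.mem_powerset.1 hA, hAm⟩
  · rw [if_neg h]
    split_ifs with h1
    · refine Finset.sum_eq_zero fun A hA => hf A ?_
      rw [(Finset.mem_powersetCard.1 hA).2]
      omega
    · rfl

/-- Double counting: a set `A' ⊆ B` arises as `A ∪ {x}` with `x ∈ B ∖ A` in `|A'|` ways. -/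
lemma sum_insert_sdiff {n m : ℕ} {f : Finset (Fin n) → ℂ}
    (hf : ∀ s : Finset (Fin n), s.card ≠ m → f s = 0) (B : Finset (Fin n)) :
    ∑ A ∈ B.powerset, ∑ x ∈ B \ A, f (insert x A) = m * ∑ A ∈ B.powerset, f A := by
  have h : ∑ A ∈ B.powerset, ∑ x ∈ B \ A, f (insert x A)
      = ∑ A ∈ B.powerset, ∑ _x ∈ A, f A := by
    rw [Finset.sum_sigma', Finset.sum_sigma']
    refine Finset.sum_bij' (fun a _ => ⟨insert a.2 a.1, a.2⟩)
      (fun a _ => ⟨a.1.erase a.2, a.2⟩) ?_ ?_ ?_ ?_ ?_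
    · rintro ⟨A, x⟩ h
      simp only [mem_sigma, mem_powerset, mem_sdiff] at h ⊢
      exact ⟨insert_subset h.2.1 h.1, mem_insert_self _ _⟩
    · rintro ⟨A, x⟩ h
      simp only [mem_sigma, mem_powerset, mem_sdiff] at h ⊢
      exact ⟨(erase_subset _ _).trans h.1, h.1 h.2, notMem_erase _ _⟩
    · rintro ⟨A, x⟩ h
      simp only [mem_sigma, mem_powerset, mem_sdiff] at h
      simp [erase_insert h.2.2]
    · rintro ⟨A, x⟩ h
      simp only [mem_sigma, mem_powerset] at h
      simp [insert_erase h.2]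
    · rintro ⟨A, x⟩ h
      rfl
  rw [h, Finset.mul_sum]
  refine Finset.sum_congr rfl fun A _ => ?_
  rw [Finset.sum_const, nsmul_eq_mul]
  by_cases hA : A.card = m
  · rw [hA]
  · rw [hf A hA, mul_zero, mul_zero]

/-- The case `p = 1`, with `q + 1` in place of `q`. -/
lemma dR_RT {n m : ℕ} (q : ℕ) {f : Finset (Fin n) → ℂ}
    (hf : ∀ s : Finset (Fin n), s.card ≠ m → f s = 0) (hdf : dR n f = 0)
    (B : Finset (Fin n)) :
    dR n (RT n (q + 1) f) B = ((n : ℂ) - 2 * m - q) * RT n q f B := by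
  rw [RT_eq q hf]
  unfold dR
  by_cases h : B.card = m + q
  · have h1 : ∀ x ∈ Bᶜ, RT n (q + 1) f (insert x B)
        = ∑ A ∈ B.powerset, f A + ∑ A ∈ B.powerset, f (insert x A) := by
      intro x hx
      have hx' : x ∉ B := Finset.mem_compl.1 hx
      rw [RT_eq (q + 1) hf, if_pos (by rw [card_insert_of_notMem hx']; omega),
        Finset.sum_powerset_insert hx']
    have h2 : ∀ A ∈ B.powerset,
        ∑ x ∈ Bᶜ, f (insert x A) = - ∑ x ∈ B \ A, f (insert x A) := by
      intro A hA
      have hAB : A ⊆ B := Finset.mem_powerset.1 hA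
      have h0 : ∑ x ∈ Aᶜ, f (insert x A) = 0 := congrFun hdf A
      have hd : Aᶜ \ Bᶜ = B \ A := by
        ext x
        simp [and_comm]
      rw [← Finset.sum_sdiff (Finset.compl_subset_compl.2 hAB), hd] at h0
      linear_combination h0
    have hcard : ((Bᶜ.card : ℕ) : ℂ) = n - (m + q) := by
      have := Finset.card_add_card_compl B
      rw [Fintype.card_fin, h] at this
      have h3 : (m : ℂ) + q + Bᶜ.card = n := mod_cast this
      linear_combination h3
    rw [if_pos h, Finset.sum_congr rfl h1, Finset.sum_add_distrib, Finset.sum_const,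
      nsmul_eq_mul, Finset.sum_comm, Finset.sum_congr rfl h2, Finset.sum_neg_distrib,
      sum_insert_sdiff hf, hcard]
    ring
  · rw [if_neg h, mul_zero]
    refine Finset.sum_eq_zero fun x hx => ?_
    rw [RT_eq (q + 1) hf, if_neg]
    rw [card_insert_of_notMem (Finset.mem_compl.1 hx)]
    omega

/-- The identity holds at every `B`, both sides vanishing unless `|B| = m + q - p`. -/
lemma dR_iterate_RT {n m q : ℕ} (p : ℕ) (hpq : p ≤ q) {f : Finset (Fin n) → ℂ}
    (hf : ∀ s : Finset (Fin n), s.card ≠ m → f s = 0) (hdf : dR n f = 0) :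
    (dR n)^[p] (RT n q f) = fun B =>
      ((poch ((n : ℤ) - 2 * m - q + 1) p : ℤ) : ℂ) * RT n (q - p) f B := by
  induction p with
  | zero => simp [poch]
  | succ p ih =>
    obtain ⟨r, rfl⟩ : ∃ r, q = r + (p + 1) := ⟨q - (p + 1), by omega⟩
    have e1 : r + (p + 1) - p = r + 1 := by omega
    have e2 : r + (p + 1) - (p + 1) = r := by omega
    rw [Function.iterate_succ_apply', ih (by omega), e1, e2]
    funext B
    have hstep := dR_RT r hf hdf B
    unfold dR at hstep ⊢
    rw [← Finset.mul_sum, hstep]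
    unfold poch
    rw [Finset.prod_range_succ]
    push_cast
    ring

/-- Lemma 2.1(2): for `f ∈ M^{n-m,m}` with `df = 0` and `1 ≤ p ≤ q ≤ n-m`,
`d^p R_q f = (n - 2m - q + 1)_p · R_{q-p} f`. -/
theorem stmt1 (n m p q : ℕ) (hn : 1 ≤ n) (hm : m ≤ n) (hp1 : 1 ≤ p) (hpq : p ≤ q)
    (hq : q ≤ n - m)
    (f : Finset (Fin n) → ℂ) (hf : ∀ s : Finset (Fin n), s.card ≠ m → f s = 0)
    (hdf : dR n f = 0)
    (B : Finset (Fin n)) (hB : B.card = m + q - p) :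
    (dR n)^[p] (RT n q f) B =
      ((poch ((n : ℤ) - 2 * m - q + 1) p : ℤ) : ℂ) * RT n (q - p) f B := by
  exact congrFun (dR_iterate_RT p hpq hf hdf) B
end
end

section
/- For every integer k with 0 ≤ k ≤ n/2, the complex dimension of S^{n−k,k} = M^{n−k,k} ∩ ker d equals C(n,k) − C(n,k−1), where C(n,−1) = 0. -/
/-!
The proof is rank–nullity for `d` restricted to `M^{n-k,k}`, a space of dimension `C(n,k)`. For
`k = 0` the map vanishes. For `k = m + 1` it is onto `M^{n-m,m}`, of dimension `C(n,m)`
(`map_dL_Mdeg`). Surjectivity follows from the commutation relation `d d* = d* d + (n - 2m)` on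
`M^{n-m,m}` (`dR_dS`): together with adjointness (`ip_dS_left`) it gives
`⟨d d* f, f⟩ = ‖df‖² + (n - 2m)‖f‖²`, so `d d*` is positive definite, hence bijective on
`M^{n-m,m}`, as soon as `2m < n`; this holds since `2(m + 1) ≤ n`.
-/

open Finset

noncomputable section

/-- `M^{n-m,m}` as the submodule of functions supported on `m`-subsets. -/
def Mdeg (n m : ℕ) : Submodule ℂ (Finset (Fin n) → ℂ) where
  carrier := {f | ∀ s : Finset (Fin n), s.card ≠ m → f s = 0}
  add_mem' := by
    intro f g hf hg s hs
    simp [hf s hs, hg s hs]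
  zero_mem' := by intro s _; rfl
  smul_mem' := by
    intro c f hf s hs
    simp [hf s hs]

/-- The Radon transform `d` as a linear map. -/
def dL (n : ℕ) : (Finset (Fin n) → ℂ) →ₗ[ℂ] Finset (Fin n) → ℂ where
  toFun := dR n
  map_add' f g := by
    funext B
    simp [dR, Finset.sum_add_distrib]
  map_smul' c f := by
    funext B
    simp [dR, Finset.mul_sum]

/-- `R_q` as a linear map. -/
def RTL (n q : ℕ) : (Finset (Fin n) → ℂ) →ₗ[ℂ] Finset (Fin n) → ℂ where
  toFun := RT n q
  map_add' f g := by
    funext B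
    by_cases h : q ≤ B.card <;> simp [RT, h, Finset.sum_add_distrib]
  map_smul' c f := by
    funext B
    by_cases h : q ≤ B.card <;> simp [RT, h, Finset.mul_sum]

/-- The number of `m`-subsets is the dimension of `M^{n-m,m}`: restriction to `m`-subsets identifies
`Mdeg n m` with the space of all functions on them. -/
lemma finrank_Mdeg (n m : ℕ) : Module.finrank ℂ (Mdeg n m) = n.choose m := by
  let e : Mdeg n m ≃ₗ[ℂ] ({s : Finset (Fin n) // s.card = m} → ℂ) :=
    { toFun := fun f s => f.1 s.1
      map_add' := fun _ _ => rfl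
      map_smul' := fun _ _ => rfl
      invFun := fun g => ⟨fun s => if h : s.card = m then g ⟨s, h⟩ else 0,
        fun s hs => by simp [hs]⟩
      left_inv := fun f => by
        ext s
        by_cases h : s.card = m
        · simp [h]
        · simp [h, f.2 s h]
      right_inv := fun g => by
        ext s
        simp [s.2] }
  rw [e.finrank_eq, Module.finrank_fintype_fun_eq_card, Fintype.card_finset_len, Fintype.card_fin]

lemma dR_mem_Mdeg {n m : ℕ} {f : Finset (Fin n) → ℂ} (hf : f ∈ Mdeg n (m + 1)) :
    dR n f ∈ Mdeg n m := by
  intro B hB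
  refine Finset.sum_eq_zero fun x hx => hf _ ?_
  rw [Finset.card_insert_of_notMem (by simpa using hx)]
  omega

lemma dS_mem_Mdeg {n m : ℕ} {f : Finset (Fin n) → ℂ} (hf : f ∈ Mdeg n m) :
    dS n f ∈ Mdeg n (m + 1) := by
  intro B hB
  refine Finset.sum_eq_zero fun x hx => hf _ ?_
  have := Finset.card_erase_add_one hx
  omega

/-- `d` kills `M^{n,0}`, since `(df)(B)` only involves values of `f` at nonempty sets. -/
lemma dR_eq_zero_of_mem_Mdeg_zero {n : ℕ} {f : Finset (Fin n) → ℂ} (hf : f ∈ Mdeg n 0) :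
    dR n f = 0 := by
  funext B
  exact Finset.sum_eq_zero fun x _ => hf _ (by simp)

/-- `d*` is adjoint to `d`: both sides sum over the pairs `(A, A ∪ {x})` with `x ∉ A`. -/
lemma ip_dS_left (n : ℕ) (f g : Finset (Fin n) → ℂ) : ip n (dS n f) g = ip n f (dR n g) := by
  simp only [ip, dS, dR, map_sum, Finset.sum_mul, Finset.mul_sum]
  rw [Finset.sum_sigma', Finset.sum_sigma']
  refine Finset.sum_bij' (fun p _ => ⟨p.1.erase p.2, p.2⟩) (fun p _ => ⟨insert p.2 p.1, p.2⟩)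
    ?_ ?_ ?_ ?_ ?_
  · rintro ⟨B, x⟩ h
    simp
  · rintro ⟨B, x⟩ h
    simp
  · rintro ⟨B, x⟩ h
    have hx : x ∈ B := by simpa using h
    simp [Finset.insert_erase hx]
  · rintro ⟨B, x⟩ h
    have hx : x ∉ B := by simpa using h
    simp [Finset.erase_insert hx]
  · rintro ⟨B, x⟩ h
    have hx : x ∈ B := by simpa using h
    simp [Finset.insert_erase hx]

/-- The commutation relation `d d* = d* d + (n - 2|B|)`: adding `x` and removing `y ≠ x` commute, and
the terms with `x = y` contribute `n - |B|` on one side and `|B|` on the other. -/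
lemma dR_dS (n : ℕ) (f : Finset (Fin n) → ℂ) (B : Finset (Fin n)) :
    dR n (dS n f) B = dS n (dR n f) B + ((n : ℂ) - 2 * B.card) * f B := by
  have h1 : dR n (dS n f) B
      = (Bᶜ.card : ℂ) * f B + ∑ x ∈ Bᶜ, ∑ y ∈ B, f ((insert x B).erase y) := by
    simp only [dR, dS]
    rw [← nsmul_eq_mul, ← Finset.sum_const, ← Finset.sum_add_distrib]
    refine Finset.sum_congr rfl fun x hx => ?_
    have hx' : x ∉ B := by simpa using hx
    rw [Finset.sum_insert hx', Finset.erase_insert hx']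
  have h2 : dS n (dR n f) B
      = (B.card : ℂ) * f B + ∑ y ∈ B, ∑ x ∈ Bᶜ, f ((insert x B).erase y) := by
    simp only [dR, dS]
    rw [← nsmul_eq_mul, ← Finset.sum_const, ← Finset.sum_add_distrib]
    refine Finset.sum_congr rfl fun y hy => ?_
    rw [Finset.compl_erase, Finset.sum_insert (by simpa using hy), Finset.insert_erase hy]
    congr 1
    refine Finset.sum_congr rfl fun x hx => ?_
    have hxy : y ≠ x := by
      rintro rfl
      simp [hy] at hx
    rw [Finset.erase_insert_of_ne hxy.symm]
  have hc : (Bᶜ.card : ℂ) = n - B.card := by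
    rw [eq_sub_iff_add_eq]
    have := Finset.card_compl_add_card B
    rw [Fintype.card_fin] at this
    exact_mod_cast this
  rw [h1, h2, Finset.sum_comm, hc]
  ring

lemma ip_self (n : ℕ) (f : Finset (Fin n) → ℂ) :
    ip n f f = ((∑ s, Complex.normSq (f s) : ℝ) : ℂ) := by
  simp [ip, Complex.mul_conj]

/-- Positivity of `d d*` below the middle layer: if `d d* f = 0` then
`0 = ⟨d* d f, f⟩ + (n - 2m)⟨f, f⟩ = ‖df‖² + (n - 2m)‖f‖²`, which forces `f = 0`. -/
lemma eq_zero_of_dR_dS_eq_zero {n m : ℕ} (hm : 2 * m < n) {f : Finset (Fin n) → ℂ}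
    (hf : f ∈ Mdeg n m) (h : dR n (dS n f) = 0) : f = 0 := by
  have key : ip n (dR n f) (dR n f) + ((n : ℂ) - 2 * m) * ip n f f = 0 := by
    rw [← ip_dS_left, ip, ip, Finset.mul_sum, ← Finset.sum_add_distrib]
    refine Finset.sum_eq_zero fun B _ => ?_
    have hB := dR_dS n f B
    rw [h] at hB
    by_cases hc : B.card = m
    · rw [hc, Pi.zero_apply] at hB
      rw [← mul_assoc, ← add_mul, ← hB, zero_mul]
    · simp [hf B hc]
  rw [ip_self, ip_self] at key
  have key' : (∑ s, Complex.normSq (dR n f s)) + ((n : ℝ) - 2 * m) * ∑ s, Complex.normSq (f s)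
      = 0 := by
    exact_mod_cast key
  have hpos : (0 : ℝ) < (n : ℝ) - 2 * m := by
    have : ((2 * m : ℕ) : ℝ) < n := by exact_mod_cast hm
    push_cast at this
    linarith
  have n1 : 0 ≤ ∑ s, Complex.normSq (dR n f s) :=
    Finset.sum_nonneg fun _ _ => Complex.normSq_nonneg _
  have n2 : 0 ≤ ∑ s, Complex.normSq (f s) :=
    Finset.sum_nonneg fun _ _ => Complex.normSq_nonneg _
  have hz : ∑ s, Complex.normSq (f s) = 0 := by nlinarith
  funext s
  have := (Finset.sum_eq_zero_iff_of_nonneg fun s _ => Complex.normSq_nonneg (f s)).1 hz s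
    (Finset.mem_univ s)
  simpa using this

/-- Below the middle layer, `d` maps `M^{n-m-1,m+1}` onto `M^{n-m,m}`: the endomorphism `d d*` of
the latter is injective, hence surjective by finite-dimensionality. -/
lemma map_dL_Mdeg {n m : ℕ} (hm : 2 * m < n) : (Mdeg n (m + 1)).map (dL n) = Mdeg n m := by
  apply le_antisymm
  · rintro _ ⟨f, hf, rfl⟩
    exact dR_mem_Mdeg hf
  · let T : Mdeg n m →ₗ[ℂ] Mdeg n m :=
      { toFun := fun f => ⟨dR n (dS n f.1), dR_mem_Mdeg (dS_mem_Mdeg f.2)⟩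
        map_add' := fun f g => by
          ext B
          simp [dR, dS, Finset.sum_add_distrib]
        map_smul' := fun c f => by
          ext B
          simp [dR, dS, Finset.mul_sum] }
    have hinj : Function.Injective T := by
      rw [injective_iff_map_eq_zero]
      intro f hf
      exact Subtype.ext (eq_zero_of_dR_dS_eq_zero hm f.2 (congrArg Subtype.val hf))
    intro g hg
    obtain ⟨f, hf⟩ := LinearMap.injective_iff_surjective.1 hinj ⟨g, hg⟩
    exact ⟨dS n f.1, dS_mem_Mdeg f.2, congrArg Subtype.val hf⟩

/-- Rank–nullity for `d` restricted to `M^{n-m,m}`. -/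
lemma finrank_map_add_finrank_inf_ker (n m : ℕ) :
    Module.finrank ℂ ((Mdeg n m).map (dL n)) +
      Module.finrank ℂ ↥(Mdeg n m ⊓ LinearMap.ker (dL n)) = n.choose m := by
  have h := ((dL n).domRestrict (Mdeg n m)).finrank_range_add_finrank_ker
  rw [LinearMap.range_domRestrict, finrank_Mdeg] at h
  rw [← h, ← Submodule.map_comap_subtype, Submodule.finrank_map_subtype_eq]
  rfl

/-- Theorem 2.2(1), dimension: `dim S^{n-k,k} = C(n,k) - C(n,k-1)` (with `C(n,-1) = 0`). -/
theorem stmt2 (n k : ℕ) (hn : 1 ≤ n) (hk : 2 * k ≤ n) :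
    Module.finrank ℂ ↥(Mdeg n k ⊓ LinearMap.ker (dL n)) =
      n.choose k - (if k = 0 then 0 else n.choose (k - 1)) := by
  have h := finrank_map_add_finrank_inf_ker n k
  cases k with
  | zero =>
    have hbot : (Mdeg n 0).map (dL n) = ⊥ := by
      rw [eq_bot_iff]
      rintro _ ⟨f, hf, rfl⟩
      exact dR_eq_zero_of_mem_Mdeg_zero hf
    rw [hbot, finrank_bot] at h
    simpa using h
  | succ m =>
    rw [map_dL_Mdeg (by omega), finrank_Mdeg] at h
    simp only [Nat.succ_ne_zero, if_false, Nat.add_sub_cancel]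
    omega
end
end

section
/- For every integer k with 0 ≤ k ≤ n/2, the subspace S^{n−k,k} of M^{n−k,k} is a nonzero S_n-invariant subspace which is irreducible: the only linear subspaces of S^{n−k,k} invariant under the action of every g ∈ S_n are {0} and S^{n−k,k} itself. -/
/-!
`S = S^{n-k,k}` is treated through its zonal spherical functions. Measure the distance from a
`k`-subset `A` to a `k`-subset `B` by `|B \ A|`.

* `sphereSum_eq`: if `h ∈ S`, summing `dh = 0` over the `(k-1)`-subsets `C` with `|C \ A| = j` gives
  a two-term recursion, so the sum of `h` over the sphere of radius `j` around `A` is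
  `(-1)^j C(k,j) h(A)`.
* `exists_zonal`, `exists_profile`: a nonzero invariant `W ≤ S` contains some `h` with `h(A) ≠ 0`.
  Averaging `h` over the stabilizer of `A`, which is transitive on each sphere around `A`
  (`exists_perm`), and rescaling gives a function `F_A ∈ W` of the form `F_A(B) = ψ(|B \ A|)`, where
  `ψ(j) = (-1)^j C(k,j) / N_j` and `N_j` is the size of the sphere of radius `j`. Its translates,
  centred at all other `k`-subsets, also lie in `W`.
* `sum_mul_profile`: for every `h ∈ S` the sphere sums give `∑_A h(A) F_A = c h` with
  `c = ∑_j (-1)^j C(k,j) ψ(j) = ∑_j C(k,j)^2 / N_j > 0`. Hence `h ∈ W`, and `W = S`.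

That `S ≠ 0` is a dimension count (`specht_ne_bot`): `d` maps `M^{n-k,k}` to a space of dimension
`C(n,k-1) < C(n,k)`.
-/

open Finset

noncomputable section

/-! ### Sphere sums of elements of `S^{n-k,k}` -/

/-- The sum of `h` over the sphere of radius `j` around `A`, the distance from `A` to `B` being
`|B \ A|`. The sum runs over sets `B` of every size; for `h ∈ M^{n-k,k}` only `k`-subsets
contribute. -/
def sphereSum (n : ℕ) (h : Finset (Fin n) → ℂ) (A : Finset (Fin n)) (j : ℕ) : ℂ :=
  ∑ B : Finset (Fin n), if (B \ A).card = j then h B else 0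

lemma sum_erase_indicator {n : ℕ} (A B : Finset (Fin n)) (j : ℕ) :
    (∑ x ∈ B, if ((B.erase x) \ A).card = j then (1 : ℂ) else 0) =
      (if (B \ A).card = j then ((B.card : ℂ) - j) else 0) +
      (if (B \ A).card = j + 1 then ((j : ℂ) + 1) else 0) := by
  have hs : ∀ x ∈ B, (if ((B.erase x) \ A).card = j then (1 : ℂ) else 0) =
      if x ∈ A then (if (B \ A).card = j then 1 else 0)
      else (if (B \ A).card = j + 1 then 1 else 0) := by
    intro x hx
    rw [Finset.erase_sdiff_comm]
    by_cases hA : x ∈ A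
    · rw [Finset.erase_eq_of_notMem (by simp [hA])]
      simp [hA]
    · have hm : x ∈ B \ A := by simp [hA, hx]
      have := Finset.card_erase_add_one hm
      simp only [hA, if_false]
      congr 1
      exact propext (by omega)
  rw [Finset.sum_congr rfl hs, Finset.sum_ite]
  have h1 : B.filter (fun x => x ∉ A) = B \ A := by ext; simp
  have h2 : B.filter (fun x => x ∈ A) = B ∩ A := by ext; simp
  rw [h1, h2, Finset.sum_const, Finset.sum_const]
  have h3 : ((B ∩ A).card : ℂ) = B.card - (B \ A).card := by
    have := Finset.card_sdiff_add_card_inter B A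
    rw [← this]; push_cast; ring
  split_ifs with h4 h5 h5
  · omega
  · simp [h3, h4]
  · simp [h5]
  · simp

/-- Double counting of the pairs `(C, x)` with `x ∉ C` against the pairs `(B, x)` with `x ∈ B`. -/
lemma sum_compl_insert {n : ℕ} (u : Finset (Fin n) → Fin n → ℂ) :
    ∑ C : Finset (Fin n), ∑ x ∈ Cᶜ, u (insert x C) x = ∑ B : Finset (Fin n), ∑ x ∈ B, u B x := by
  rw [Finset.sum_sigma', Finset.sum_sigma']
  refine Finset.sum_bij' (fun p _ => ⟨insert p.2 p.1, p.2⟩) (fun p _ => ⟨p.1.erase p.2, p.2⟩)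
    ?_ ?_ ?_ ?_ ?_
  · intro p _; simp
  · intro p _; simp
  · rintro ⟨C, x⟩ hp
    simp only [Finset.mem_sigma, Finset.mem_univ, Finset.mem_compl, true_and] at hp
    simp [hp]
  · rintro ⟨C, x⟩ hp
    simp only [Finset.mem_sigma, Finset.mem_univ, true_and] at hp
    simp [hp]
  · intro p _; rfl

lemma sphereSum_rec {n k : ℕ} {h : Finset (Fin n) → ℂ}
    (hh : h ∈ Mdeg n k ⊓ LinearMap.ker (dL n)) (A : Finset (Fin n)) (j : ℕ) :
    ((k : ℂ) - j) * sphereSum n h A j + ((j : ℂ) + 1) * sphereSum n h A (j + 1) = 0 := by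
  obtain ⟨h1, h2⟩ := hh
  have h2' : ∀ B, dR n h B = 0 := fun B => congrFun (LinearMap.mem_ker.1 h2) B
  have key : ∑ B : Finset (Fin n), ∑ x ∈ B,
      (if ((B.erase x) \ A).card = j then (1 : ℂ) else 0) * h B = 0 := by
    rw [← sum_compl_insert (fun B x => (if ((B.erase x) \ A).card = j then (1 : ℂ) else 0) * h B)]
    refine Finset.sum_eq_zero fun C _ => ?_
    have : ∀ x ∈ Cᶜ, (if (((insert x C).erase x) \ A).card = j then (1 : ℂ) else 0) *
        h (insert x C) = (if (C \ A).card = j then (1 : ℂ) else 0) * h (insert x C) := by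
      intro x hx
      rw [Finset.erase_insert (by simpa using hx)]
    rw [Finset.sum_congr rfl this, ← Finset.mul_sum]
    have := h2' C
    rw [dR] at this
    rw [this, mul_zero]
  rw [← key, sphereSum, sphereSum, Finset.mul_sum, Finset.mul_sum, ← Finset.sum_add_distrib]
  refine Finset.sum_congr rfl fun B _ => ?_
  rw [← Finset.sum_mul, sum_erase_indicator]
  by_cases hB : B.card = k
  · rw [hB]; split_ifs <;> ring
  · rw [h1 B hB]; simp

lemma sphereSum_zero {n k : ℕ} {h : Finset (Fin n) → ℂ} (hh : h ∈ Mdeg n k)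
    {A : Finset (Fin n)} (hA : A.card = k) : sphereSum n h A 0 = h A := by
  rw [sphereSum, Finset.sum_eq_single A]
  · simp
  · intro B _ hBA
    split_ifs with hs
    · apply hh
      intro hB
      rw [Finset.card_eq_zero, Finset.sdiff_eq_empty_iff_subset] at hs
      exact hBA (Finset.eq_of_subset_of_card_le hs (by omega))
    · rfl
  · simp

/-- The value at the centre determines all sphere sums of an element of `S^{n-k,k}`. -/
lemma sphereSum_eq {n k : ℕ} {h : Finset (Fin n) → ℂ}
    (hh : h ∈ Mdeg n k ⊓ LinearMap.ker (dL n)) {A : Finset (Fin n)} (hA : A.card = k) (j : ℕ) :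
    sphereSum n h A j = (-1) ^ j * (k.choose j : ℂ) * h A := by
  induction j with
  | zero => simp [sphereSum_zero hh.1 hA]
  | succ j ih =>
    have h1 := sphereSum_rec hh A j
    have h2 : (k.choose (j + 1) : ℂ) * (j + 1) = k.choose j * ((k : ℂ) - j) := by
      rcases le_or_gt j k with hjk | hjk
      · have := Nat.choose_succ_right_eq k j
        rw [← Nat.cast_sub hjk]; exact_mod_cast this
      · simp [Nat.choose_eq_zero_of_lt hjk, Nat.choose_eq_zero_of_lt (Nat.lt_succ_of_lt hjk)]
    have h3 : ((j : ℂ) + 1) ≠ 0 := by exact_mod_cast Nat.succ_ne_zero j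
    apply mul_left_cancel₀ h3
    rw [ih] at h1
    rw [pow_succ]
    linear_combination h1 + (-1) ^ j * h A * h2

/-! ### The action of the symmetric group -/

/-- The action of `S_n` on `Ω_k` is two-point homogeneous: the orbit of a pair `(A, B)` is
determined by `|B \ A|`. -/
lemma exists_perm {n k : ℕ} {A B A' B' : Finset (Fin n)} (hA : A.card = k) (hB : B.card = k)
    (hA' : A'.card = k) (hB' : B'.card = k) (h : (B \ A).card = (B' \ A').card) :
    ∃ g : Equiv.Perm (Fin n), A.image g = A' ∧ B.image g = B' := by
  have e : ∀ c : Prop × Prop, Nonempty ({x // ((x ∈ A, x ∈ B) : Prop × Prop) = c} ≃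
      {x // ((x ∈ A', x ∈ B') : Prop × Prop) = c}) := by
    intro c
    classical
    refine ⟨Fintype.equivOfCardEq ?_⟩
    rw [Fintype.card_subtype, Fintype.card_subtype]
    obtain ⟨p, q⟩ := c
    have a1 := Finset.card_sdiff_add_card_inter B A
    have a2 := Finset.card_sdiff_add_card_inter B' A'
    have a3 := Finset.card_sdiff_add_card_inter A B
    have a4 := Finset.card_sdiff_add_card_inter A' B'
    have a5 := Finset.card_union_add_card_inter A B
    have a6 := Finset.card_union_add_card_inter A' B'
    have a7 := Finset.card_add_card_compl (A ∪ B)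
    have a8 := Finset.card_add_card_compl (A' ∪ B')
    rw [Finset.inter_comm] at a1 a2
    by_cases hp : p <;> by_cases hq : q <;>
      simp only [Prod.mk.injEq, hp, hq, eq_iff_iff, iff_true, iff_false]
    · have t : ∀ X Y : Finset (Fin n), univ.filter (fun x => x ∈ X ∧ x ∈ Y) = X ∩ Y := by
        intros; ext; simp
      rw [t, t]; omega
    · have t : ∀ X Y : Finset (Fin n), univ.filter (fun x => x ∈ X ∧ x ∉ Y) = X \ Y := by
        intros; ext; simp
      rw [t, t]; omega
    · have t : ∀ X Y : Finset (Fin n), univ.filter (fun x => x ∉ X ∧ x ∈ Y) = Y \ X := by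
        intros; ext; simp [and_comm]
      rw [t, t]; omega
    · have t : ∀ X Y : Finset (Fin n), univ.filter (fun x => x ∉ X ∧ x ∉ Y) = (X ∪ Y)ᶜ := by
        intros; ext; simp
      rw [t, t]; omega
  let g : Equiv.Perm (Fin n) := Equiv.ofFiberEquiv (fun c => (e c).some)
  have hg : ∀ x, ((g x ∈ A', g x ∈ B') : Prop × Prop) = (x ∈ A, x ∈ B) :=
    fun x => Equiv.ofFiberEquiv_map (fun c => (e c).some) x
  simp only [Prod.mk.injEq, eq_iff_iff] at hg
  refine ⟨g, ?_, ?_⟩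
  · ext y
    obtain ⟨x, rfl⟩ := g.surjective y
    simp [hg]
  · ext y
    obtain ⟨x, rfl⟩ := g.surjective y
    simp [hg]

lemma permAct_mem {n k : ℕ} (g : Equiv.Perm (Fin n)) {f : Finset (Fin n) → ℂ}
    (hf : f ∈ Mdeg n k ⊓ LinearMap.ker (dL n)) :
    permAct n g f ∈ Mdeg n k ⊓ LinearMap.ker (dL n) := by
  obtain ⟨h1, h2⟩ := hf
  have h2' : ∀ B, dR n f B = 0 := fun B => congrFun (LinearMap.mem_ker.1 h2) B
  refine ⟨?_, LinearMap.mem_ker.2 (funext fun B => ?_)⟩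
  · intro s hs
    apply h1
    rwa [Finset.card_image_of_injective _ (Equiv.injective _)]
  · change dR n (permAct n g f) B = 0
    rw [← h2' (B.image ⇑g⁻¹), dR, dR]
    refine Finset.sum_equiv g⁻¹ ?_ ?_
    · intro x; simp
    · intro x _
      simp [permAct, Finset.image_insert]

/-! ### Nonvanishing -/

/-- Injectivity of `d` on `M^{n-k,k}` is excluded by `C(n,k-1) < C(n,k)`. -/
lemma specht_ne_bot (n k : ℕ) (hk : 2 * k ≤ n) : Mdeg n k ⊓ LinearMap.ker (dL n) ≠ ⊥ := by
  let E : ({s : Finset (Fin n) // s.card = k} → ℂ) →ₗ[ℂ] (Finset (Fin n) → ℂ) :=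
    { toFun := fun v s => if h : s.card = k then v ⟨s, h⟩ else 0
      map_add' := by intro v w; funext s; by_cases h : s.card = k <;> simp [h]
      map_smul' := by intro c v; funext s; by_cases h : s.card = k <;> simp [h] }
  let L : ({s : Finset (Fin n) // s.card = k} → ℂ) →ₗ[ℂ]
      ({s : Finset (Fin n) // s.card + 1 = k} → ℂ) :=
    LinearMap.funLeft ℂ ℂ Subtype.val ∘ₗ dL n ∘ₗ E
  have hlt : Module.finrank ℂ ({s : Finset (Fin n) // s.card + 1 = k} → ℂ) <
      Module.finrank ℂ ({s : Finset (Fin n) // s.card = k} → ℂ) := by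
    rw [Module.finrank_fintype_fun_eq_card, Module.finrank_fintype_fun_eq_card,
      Fintype.card_finset_len, Fintype.card_fin]
    cases k with
    | zero => simp
    | succ m =>
      simp only [Nat.add_right_cancel_iff]
      rw [Fintype.card_finset_len, Fintype.card_fin]
      have h1 := Nat.choose_succ_right_eq n m
      have h2 : 0 < n.choose m := Nat.choose_pos (by omega)
      by_contra hcon
      have h3 : n.choose (m + 1) * (m + 1) ≤ n.choose m * (m + 1) :=
        Nat.mul_le_mul_right _ (not_lt.1 hcon)
      have h4 : n.choose m * (m + 1) < n.choose m * (n - m) :=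
        Nat.mul_lt_mul_of_pos_left (by omega) h2
      omega
  obtain ⟨v, hv, hv0⟩ := (Submodule.ne_bot_iff _).1
    (LinearMap.ker_ne_bot_of_finrank_lt hlt : LinearMap.ker L ≠ ⊥)
  refine (Submodule.ne_bot_iff _).2 ⟨E v, ⟨?_, ?_⟩, ?_⟩
  · intro s hs
    simp [E, hs]
  · refine LinearMap.mem_ker.2 (funext fun B => ?_)
    by_cases hB : B.card + 1 = k
    · exact congrFun (LinearMap.mem_ker.1 hv) ⟨B, hB⟩
    · refine Finset.sum_eq_zero fun x hx => ?_
      have : (insert x B).card ≠ k := by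
        rw [Finset.card_insert_of_notMem (by simpa using hx)]; exact hB
      simp [E, this]
  · intro h0
    apply hv0
    funext s
    have := congrFun h0 s.1
    simpa [E, s.2] using this

/-! ### Zonal functions and irreducibility -/

/-- A nonzero invariant subspace contains, after averaging over the stabilizer of a `k`-subset
`A`, a function whose value at `B` depends only on `|B \ A|`. -/
lemma exists_zonal {n k : ℕ} {W : Submodule ℂ (Finset (Fin n) → ℂ)}
    (hW : W ≤ Mdeg n k ⊓ LinearMap.ker (dL n))
    (hinv : ∀ (g : Equiv.Perm (Fin n)) (f : Finset (Fin n) → ℂ), f ∈ W → permAct n g f ∈ W)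
    (h0 : W ≠ ⊥) :
    ∃ A : Finset (Fin n), A.card = k ∧ ∃ F ∈ W, F A = 1 ∧
      ∀ B B' : Finset (Fin n), B.card = k → B'.card = k → (B \ A).card = (B' \ A).card →
        F B = F B' := by
  obtain ⟨h, hhW, hne⟩ := (Submodule.ne_bot_iff _).1 h0
  obtain ⟨A, hA⟩ := Function.ne_iff.1 hne
  have hAk : A.card = k := by
    by_contra hc
    exact hA ((hW hhW).1 A hc)
  let G : Finset (Equiv.Perm (Fin n)) := univ.filter (fun g => A.image g = A)
  have hGinv : ∀ g ∈ G, A.image ⇑g⁻¹ = A := by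
    intro g hg
    have hg' : A.image g = A := by simpa [G] using hg
    conv_lhs => rw [← hg']
    rw [Finset.image_image, ← Equiv.Perm.coe_mul, inv_mul_cancel, Equiv.Perm.coe_one,
      Finset.image_id]
  let F₀ : Finset (Fin n) → ℂ := ∑ g ∈ G, permAct n g h
  have hF₀ : ∀ B, F₀ B = ∑ g ∈ G, h (B.image ⇑g⁻¹) := by
    intro B; simp [F₀, permAct]
  have hF₀W : F₀ ∈ W := Submodule.sum_mem _ fun g _ => hinv g h hhW
  have hFA : F₀ A ≠ 0 := by
    rw [hF₀, Finset.sum_congr rfl (fun g hg => by rw [hGinv g hg]), Finset.sum_const]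
    have hG : G.card ≠ 0 := Finset.card_ne_zero_of_mem (a := 1) (by simp [G])
    simpa [hG] using hA
  refine ⟨A, hAk, (F₀ A)⁻¹ • F₀, W.smul_mem _ hF₀W, by simp [hFA], ?_⟩
  intro B B' hB hB' hBB
  obtain ⟨t, ht, htB⟩ := exists_perm hAk hB hAk hB' hBB
  suffices F₀ B = F₀ B' by simp [this]
  rw [hF₀, hF₀]
  refine Finset.sum_equiv (Equiv.mulLeft t) ?_ ?_
  · intro g
    have : A.image ⇑(t * g) = (A.image g).image t := by
      rw [Finset.image_image, Equiv.Perm.coe_mul]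
    simp only [G, Finset.mem_filter, Finset.mem_univ, true_and, Equiv.coe_mulLeft]
    rw [this]
    conv_rhs => rhs; rw [← ht]
    exact (Finset.image_injective t.injective).eq_iff.symm
  · intro g _
    rw [← htB, Finset.image_image, ← Equiv.Perm.coe_mul]
    simp

/-- A function of the distance `|B \ A|` with centre value `1` has, by the formula for sphere
sums, the value `(-1)^j C(k,j) / N_j` at distance `j`, with `N_j` the size of the sphere. The
normalising sum `c` below is then a sum of nonnegative reals with a positive term at `j = 0`. -/
lemma exists_profile {n k : ℕ} {A : Finset (Fin n)} (hA : A.card = k) {F : Finset (Fin n) → ℂ}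
    (hF : F ∈ Mdeg n k ⊓ LinearMap.ker (dL n)) (hFA : F A = 1)
    (hzon : ∀ B B' : Finset (Fin n), B.card = k → B'.card = k →
      (B \ A).card = (B' \ A).card → F B = F B') :
    ∃ ψ : ℕ → ℂ, (∀ B : Finset (Fin n), B.card = k → F B = ψ (B \ A).card) ∧
      ∑ j ∈ Finset.range (n + 1), (-1) ^ j * (k.choose j : ℂ) * ψ j ≠ 0 := by
  let N : ℕ → ℕ := fun j => (univ.filter
    (fun B : Finset (Fin n) => B.card = k ∧ (B \ A).card = j)).card
  refine ⟨fun j => (-1) ^ j * (k.choose j : ℂ) / N j, ?_, ?_⟩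
  · intro B hB
    have hN : (N (B \ A).card : ℂ) ≠ 0 := by
      exact_mod_cast Finset.card_ne_zero_of_mem (a := B) (by simp [hB])
    have h1 := sphereSum_eq hF hA (B \ A).card
    rw [hFA, mul_one] at h1
    change F B = (-1) ^ (B \ A).card * (k.choose (B \ A).card : ℂ) / N (B \ A).card
    rw [← h1, eq_div_iff hN, sphereSum, ← Finset.sum_filter]
    have h2 : ∑ C : Finset (Fin n) with (C \ A).card = (B \ A).card, F C =
        ∑ C : Finset (Fin n) with C.card = k ∧ (C \ A).card = (B \ A).card, F C := by
      symm
      apply Finset.sum_subset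
      · intro C; simp
      · intro C hC hC'
        apply hF.1
        intro hc
        apply hC'
        simp only [Finset.mem_filter, Finset.mem_univ, true_and] at hC ⊢
        exact ⟨hc, hC⟩
    rw [h2, Finset.sum_congr rfl (g := fun _ => F B), Finset.sum_const, nsmul_eq_mul, mul_comm]
    intro C hC
    simp only [Finset.mem_filter, Finset.mem_univ, true_and] at hC
    exact hzon C B hC.1 hB hC.2
  · have hsum : ∑ j ∈ Finset.range (n + 1),
        (-1) ^ j * (k.choose j : ℂ) * ((-1) ^ j * (k.choose j : ℂ) / N j) =
        ((∑ j ∈ Finset.range (n + 1), (k.choose j : ℝ) ^ 2 / N j : ℝ) : ℂ) := by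
      push_cast
      refine Finset.sum_congr rfl fun j _ => ?_
      have : ((-1 : ℂ) ^ j) * (-1) ^ j = 1 := by rw [← mul_pow]; simp
      linear_combination ((k.choose j : ℂ) ^ 2 / N j) * this
    rw [hsum, Complex.ofReal_ne_zero]
    apply ne_of_gt
    refine Finset.sum_pos' (fun j _ => by positivity) ⟨0, by simp, ?_⟩
    have hN : 0 < N 0 := Finset.card_pos.2 ⟨A, by simp [hA]⟩
    have : (0 : ℝ) < N 0 := by exact_mod_cast hN
    simpa using this

/-- Summing an element of `S^{n-k,k}` against a function of the distance to `B` multiplies its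
value at `B` by a constant. -/
lemma sum_mul_profile {n k : ℕ} {h : Finset (Fin n) → ℂ}
    (hh : h ∈ Mdeg n k ⊓ LinearMap.ker (dL n)) {B : Finset (Fin n)} (hB : B.card = k)
    (ψ : ℕ → ℂ) :
    ∑ A : Finset (Fin n), h A * ψ (A \ B).card =
      (∑ j ∈ Finset.range (n + 1), (-1) ^ j * (k.choose j : ℂ) * ψ j) * h B := by
  have h1 : ∀ A : Finset (Fin n), h A * ψ (A \ B).card =
      ∑ j ∈ Finset.range (n + 1), (if (A \ B).card = j then h A else 0) * ψ j := by
    intro A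
    rw [Finset.sum_eq_single (A \ B).card]
    · simp
    · intro j _ hj
      simp [hj.symm]
    · intro hnot
      have := Finset.card_le_univ (A \ B)
      simp at hnot this
      omega
  rw [Finset.sum_congr rfl fun A _ => h1 A, Finset.sum_comm, Finset.sum_mul]
  refine Finset.sum_congr rfl fun j _ => ?_
  rw [← Finset.sum_mul]
  have := sphereSum_eq hh hB j
  rw [sphereSum] at this
  rw [this]; ring

/-- Theorem 2.2(1), irreducibility: `S^{n-k,k}` is a nonzero `S_n`-invariant subspace whose
only invariant subspaces are `{0}` and itself. -/
theorem stmt3 (n k : ℕ) (hn : 1 ≤ n) (hk : 2 * k ≤ n) :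
    (Mdeg n k ⊓ LinearMap.ker (dL n) ≠ ⊥) ∧
    (∀ (g : Equiv.Perm (Fin n)) (f : Finset (Fin n) → ℂ),
      f ∈ Mdeg n k ⊓ LinearMap.ker (dL n) → permAct n g f ∈ Mdeg n k ⊓ LinearMap.ker (dL n)) ∧
    (∀ W : Submodule ℂ (Finset (Fin n) → ℂ), W ≤ Mdeg n k ⊓ LinearMap.ker (dL n) →
      (∀ (g : Equiv.Perm (Fin n)) (f : Finset (Fin n) → ℂ), f ∈ W → permAct n g f ∈ W) →
      W = ⊥ ∨ W = Mdeg n k ⊓ LinearMap.ker (dL n)) := by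
  refine ⟨specht_ne_bot n k hk, fun g f hf => permAct_mem g hf, fun W hW hinv => ?_⟩
  by_cases h0 : W = ⊥
  · exact Or.inl h0
  refine Or.inr (le_antisymm hW fun h hh => ?_)
  obtain ⟨A₀, hA₀, F, hFW, hFA, hzon⟩ := exists_zonal hW hinv h0
  obtain ⟨ψ, hψ, hc⟩ := exists_profile hA₀ (hW hFW) hFA hzon
  set c := ∑ j ∈ Finset.range (n + 1), (-1) ^ j * (k.choose j : ℂ) * ψ j
  -- The zonal functions centred at the other `k`-subsets are the translates of `F`.
  have htrans : ∀ A : Finset (Fin n), ∃ FA ∈ W, A.card = k →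
      ∀ B : Finset (Fin n), B.card = k → FA B = ψ (B \ A).card := by
    intro A
    by_cases hA : A.card = k
    · obtain ⟨g, hg, -⟩ := exists_perm hA₀ hA₀ hA hA (by simp)
      refine ⟨permAct n g F, hinv g F hFW, fun _ B hB => ?_⟩
      rw [permAct, hψ _ (by rwa [Finset.card_image_of_injective _ (Equiv.injective _)])]
      have h1 : A.image ⇑g⁻¹ = A₀ := by
        rw [← hg]
        rw [Finset.image_image, ← Equiv.Perm.coe_mul, inv_mul_cancel, Equiv.Perm.coe_one,
          Finset.image_id]
      rw [← h1, ← Finset.image_sdiff _ _ (Equiv.injective _),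
        Finset.card_image_of_injective _ (Equiv.injective _)]
    · exact ⟨0, W.zero_mem, fun h => absurd h hA⟩
  choose Z hZW hZ using htrans
  have hrep : h = c⁻¹ • ∑ A : Finset (Fin n), h A • Z A := by
    funext B
    by_cases hB : B.card = k
    · have h1 : ∀ A : Finset (Fin n), h A * Z A B = h A * ψ (A \ B).card := by
        intro A
        by_cases hA : A.card = k
        · rw [hZ A hA B hB, Finset.card_sdiff_comm (hB.trans hA.symm)]
        · rw [hh.1 A hA]; simp
      simp only [Pi.smul_apply, Finset.sum_apply, smul_eq_mul]
      rw [Finset.sum_congr rfl fun A _ => h1 A, sum_mul_profile hh hB ψ]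
      rw [inv_mul_cancel_left₀ hc]
    · have h1 : ∀ A : Finset (Fin n), Z A B = 0 := fun A => (hW (hZW A)).1 B hB
      simp [hh.1 B hB, h1]
  rw [hrep]
  exact W.smul_mem _ (W.sum_mem fun A _ => W.smul_mem _ (hZW A))
end
end

section
/- Let 0 ≤ m, h ≤ n, 0 ≤ k ≤ min{n−m, m}, 0 ≤ i ≤ h/2, 0 ≤ j ≤ (n−h)/2, and suppose k−h ≤ j−i ≤ n−h−k and i+j ≤ k. For φ ∈ S^{h−i,i}(A) and ψ ∈ S^{n−h−j,j}(B), and for k ≤ r ≤ n−k, define T_r(φ⊗ψ) = Σ_{w=max{j, i−h+r}}^{min{n−h−j, r−i}} E_{k−i−j}(n−h−2j, h−2i, r−i−j, w−j)·(R_{r−w−i}φ)⊗(R_{w−j}ψ) ∈ M^{n−r,r}. Then d(T_k(φ⊗ψ)) = 0 (so T_k(φ⊗ψ) ∈ S^{n−k,k}) and T_m(φ⊗ψ) = R_{m−k}(T_k(φ⊗ψ)); in particular T_m(φ⊗ψ) belongs to the subspace R_{m−k}(S^{n−k,k}) of M^{n−m,m}. -/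
/-!
Let `P f (X) = ∑_{S ⊆ X} f(S)` be the zeta transform. Since `φ` and `ψ` live on `i`-sets of `A` and
`j`-sets of `B`, the functions `R_q φ`, `R_q ψ` are the restrictions of `P φ`, `P ψ` to sets of one
size. With `K = k - i - j`, `a = n - h - 2j` and `b = h - 2i` this gives (`Tmap_eq`)
`T_r(φ ⊗ ψ)(Z) = E_K(a, b, x + y, x) · P φ (Z ∩ A) · P ψ (Z ∩ B)` for `|Z| = r`, where
`x = |Z ∩ B| - j` and `y = |Z ∩ A| - i`. The limits of summation in `T_r` do not matter because
`P φ` vanishes on subsets of `A` with fewer than `i` or more than `h - i` elements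
(`zetaT_of_card_gt`, from an inclusion–exclusion that uses `dφ = 0`), and likewise for `ψ`.

For natural `x`, `y` one has `E_K(a, b, x + y, x) = ∑_v c_v · C(x, v) · C(y, K - v)` with
`c_v = (-1)^(K-v) · K! · (b-K+1)_v · (a-K+1)_(K-v)` (`hahnE_eq_hahnF`), which is just `c_x` when
`x + y = K`, the case `r = k`.

* `d T_k = 0`: `∑_{x ∈ A ∖ U} P φ (U ∪ {x}) = (h - i - |U|) P φ (U)` (`sum_zetaT_insert`) and its
  analogue for `ψ` reduce the claim to `c_x (b - y) + c_(x+1) (a - x) = 0` for `x + y + 1 = K`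
  (`hahnCoef_rec`).
* `T_m = R_{m-k} T_k`: summing `T_k` over the subsets of `Z` splits along `A ∪ B`, and
  `∑_{V ⊆ X, |V| = j + v} P ψ (V) = C(|X| - j, v) · P ψ (X)` (`sum_zetaT_card`) produces exactly the
  binomial form of `E_K`.
-/


open Finset

noncomputable section

/-- The map `T_r(φ ⊗ ψ)` of Theorem 2.6. -/
def Tmap (n h i j k : ℕ) (φ ψ : Finset (Fin n) → ℂ) (r : ℕ) : Finset (Fin n) → ℂ :=
  fun Z => ∑ w ∈ Finset.Icc (max j (i + r - h)) (min (n - h - j) (r - i)),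
    ((hahnE (k - i - j) ((n : ℤ) - h - 2 * j) ((h : ℤ) - 2 * i) ((r : ℤ) - i - j)
      ((w : ℤ) - j) : ℤ) : ℂ) * tens n h (RT n (r - w - i) φ) (RT n (w - j) ψ) Z

/-- The zeta transform `(P f)(X) = ∑_{S ⊆ X} f(S)`. For `f` supported on `i`-sets it packages all
the functions `R_q f` at once. -/
def zetaT (n : ℕ) (f : Finset (Fin n) → ℂ) (X : Finset (Fin n)) : ℂ :=
  ∑ S ∈ X.powerset, f S

/-- The value `E_K(a,b,K,v)` of the Hahn polynomial for `0 ≤ v ≤ K`. -/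
def hahnCoef (K : ℕ) (a b : ℤ) (v : ℕ) : ℤ :=
  (-1) ^ (K - v) * (K.factorial : ℤ) * poch (b - K + 1) v * poch (a - K + 1) (K - v)

/-- The binomial form of `E_K(a,b,x+y,x)` for natural numbers `x`, `y`. -/
def hahnF (K : ℕ) (a b : ℤ) (x y : ℕ) : ℤ :=
  ∑ v ∈ range (K + 1), hahnCoef K a b v * (x.choose v : ℤ) * (y.choose (K - v) : ℤ)

/-! ### Hahn polynomials -/

lemma poch_succ (t : ℤ) (p : ℕ) : poch t (p + 1) = poch t p * (t + p) := by
  simp [poch, Finset.prod_range_succ]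

lemma poch_neg (x p : ℕ) :
    poch (-(x : ℤ)) p = (-1) ^ p * (p.factorial : ℤ) * (x.choose p : ℤ) := by
  have h : poch (-(x : ℤ)) p = (-1) ^ p * (x.descFactorial p : ℤ) := by
    induction p with
    | zero => simp [poch]
    | succ p ih =>
      rw [poch_succ, ih, Nat.descFactorial_succ]
      by_cases hp : p ≤ x
      · push_cast [Nat.cast_sub hp]; ring
      · rw [Nat.descFactorial_of_lt (by omega)]; simp
  rw [h, Nat.descFactorial_eq_factorial_mul_choose]
  push_cast; ring

lemma hahnE_eq_hahnF (K : ℕ) (a b : ℤ) (x y : ℕ) :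
    hahnE K a b ((x : ℤ) + y) x = hahnF K a b x y := by
  have h1 : hahnE K a b ((x : ℤ) + y) x =
      ∑ v ∈ (range (K + 1)).filter (fun v => v ≤ x ∧ K - v ≤ y),
        hahnCoef K a b v * (x.choose v : ℤ) * (y.choose (K - v) : ℤ) := by
    unfold hahnE
    refine Finset.sum_nbij' (fun z => z.toNat) (fun v => (v : ℤ)) ?_ ?_ ?_ ?_ ?_
    · intro z hz
      simp only [mem_Icc, mem_filter, mem_range] at hz ⊢
      omega
    · intro z hz
      simp only [mem_Icc, mem_filter, mem_range] at hz ⊢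
      omega
    · intro z hz
      simp only [mem_Icc] at hz
      omega
    · intro z hz
      simp
    · intro z hz
      simp only [mem_Icc] at hz
      obtain ⟨v, rfl⟩ : ∃ v : ℕ, z = v := ⟨z.toNat, by omega⟩
      have hv : v ≤ K := by omega
      simp only [Int.toNat_natCast]
      have e : ((x : ℤ) - ((x : ℤ) + y)) = -(y : ℤ) := by ring
      rw [e, poch_neg, poch_neg, hahnCoef, ← Nat.choose_mul_factorial_mul_factorial hv]
      have hs : ((-1 : ℤ)) ^ v * (-1) ^ v = 1 := by rw [← mul_pow]; simp
      push_cast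
      linear_combination ((K.choose v : ℤ) * v.factorial * (x.choose v) * poch (b - K + 1) v *
        poch (a - K + 1) (K - v) * (-1) ^ (K - v) * (K - v).factorial * (y.choose (K - v))) * hs
  rw [h1, hahnF]
  refine Finset.sum_subset (filter_subset _ _) ?_
  intro v hv hv'
  simp only [mem_filter, not_and, not_le] at hv'
  by_cases hx : v ≤ x
  · rw [Nat.choose_eq_zero_of_lt (hv' hv hx)]; simp
  · rw [Nat.choose_eq_zero_of_lt (not_le.mp hx)]; simp

/-- On the diagonal `x + y = K` only the summand `v = x` survives. -/
lemma hahnF_diag {K x y : ℕ} (a b : ℤ) (hxy : x + y = K) :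
    hahnF K a b x y = hahnCoef K a b x := by
  rw [hahnF, Finset.sum_eq_single x]
  · rw [show K - x = y by omega]; simp
  · intro v hv hne
    simp only [mem_range] at hv
    rcases lt_or_gt_of_ne hne with h | h
    · rw [Nat.choose_eq_zero_of_lt (show y < K - v by omega)]; simp
    · rw [Nat.choose_eq_zero_of_lt h]; simp
  · intro h; simp only [mem_range] at h; omega

/-- The two-term recurrence that makes `T_k(φ ⊗ ψ)` lie in the kernel of `d`. -/
lemma hahnCoef_rec {K x y : ℕ} (a b : ℤ) (hxy : x + y + 1 = K) :
    hahnCoef K a b x * (b - y) + hahnCoef K a b (x + 1) * (a - x) = 0 := by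
  unfold hahnCoef
  rw [show K - x = y + 1 by omega, show K - (x + 1) = y by omega, poch_succ, poch_succ]
  have : (K : ℤ) = x + y + 1 := by exact_mod_cast hxy.symm
  rw [this]; ring

/-! ### The zeta transform of a function on `i`-sets -/

section zeta
variable {n : ℕ}

lemma RT_eq_zetaT {i : ℕ} {f : Finset (Fin n) → ℂ} (hf : ∀ s, s.card ≠ i → f s = 0)
    (q : ℕ) (X : Finset (Fin n)) :
    RT n q f X = if X.card = q + i then zetaT n f X else 0 := by
  unfold RT
  by_cases h : X.card = q + i
  · rw [if_pos (by omega), if_pos h, zetaT, show X.card - q = i by omega]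
    refine Finset.sum_subset ?_ ?_
    · intro S hS; rw [mem_powersetCard] at hS; exact mem_powerset.2 hS.1
    · intro S hS hS'
      exact hf S fun hc => hS' (mem_powersetCard.2 ⟨mem_powerset.1 hS, hc⟩)
  · rw [if_neg h]
    split_ifs with hq
    · refine Finset.sum_eq_zero fun S hS => hf S ?_
      rw [mem_powersetCard] at hS
      omega
    · rfl

lemma zetaT_of_card_lt {i : ℕ} {f : Finset (Fin n) → ℂ} (hf : ∀ s, s.card ≠ i → f s = 0)
    {X : Finset (Fin n)} (hX : X.card < i) : zetaT n f X = 0 := by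
  refine Finset.sum_eq_zero fun S hS => hf S ?_
  have := card_le_card (mem_powerset.1 hS)
  omega

/-- For `f` on `i`-sets with `df = 0`, the sum of `f` over all sets containing a fixed set with
fewer than `i` elements vanishes. -/
lemma sum_superset {i : ℕ} {f : Finset (Fin n) → ℂ} (hf : ∀ s, s.card ≠ i → f s = 0)
    (hd : dR n f = 0) (t : ℕ) : ∀ S : Finset (Fin n), S.card + t + 1 = i →
      ∑ Y ∈ univ.filter (fun Y => S ⊆ Y), f Y = 0 := by
  induction t with
  | zero =>
    intro S hS
    rw [← show dR n f S = 0 by rw [hd]; rfl, dR]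
    symm
    refine Finset.sum_of_injOn (fun x => insert x S) ?_ ?_ ?_ ?_
    · intro x hx y hy hxy
      simp only [coe_compl, Set.mem_compl_iff, mem_coe] at hx hy
      have : x ∈ insert y S := by
        rw [← show insert x S = insert y S from hxy]; exact mem_insert_self _ _
      rcases mem_insert.1 this with h | h
      · exact h
      · exact absurd h hx
    · intro x hx
      simp
    · intro Y hY hY'
      refine hf Y fun hc => hY' ?_
      have hSY : S ⊆ Y := (mem_filter.1 hY).2
      have h1 : (Y \ S).card = 1 := by rw [card_sdiff_of_subset hSY]; omega
      obtain ⟨x, hx⟩ := card_eq_one.1 h1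
      have hxm : x ∈ Y \ S := by rw [hx]; simp
      refine ⟨x, by simpa using (mem_sdiff.1 hxm).2, ?_⟩
      show insert x S = Y
      rw [insert_eq, ← hx, sdiff_union_of_subset hSY]
    · intro x hx; rfl
  | succ t ih =>
    intro S hS
    -- double counting of the pairs `(x, Y)` with `insert x S ⊆ Y` and `x ∉ S`
    have key : ∑ x ∈ Sᶜ, ∑ Y ∈ univ.filter (fun Y => insert x S ⊆ Y), f Y =
        ∑ Y ∈ univ.filter (fun Y => S ⊆ Y), ((t : ℂ) + 2) * f Y := by
      have : ∀ Y ∈ univ.filter (fun Y => S ⊆ Y), ((t : ℂ) + 2) * f Y = ∑ x ∈ Y \ S, f Y := by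
        intro Y hY
        rw [sum_const, nsmul_eq_mul]
        by_cases hc : Y.card = i
        · rw [card_sdiff_of_subset (mem_filter.1 hY).2, show Y.card - S.card = t + 2 by omega]
          push_cast; rfl
        · rw [hf Y hc]; simp
      rw [Finset.sum_congr rfl this]
      refine Finset.sum_comm' ?_
      intro x Y
      simp only [mem_compl, mem_filter, mem_univ, true_and, mem_sdiff, insert_subset_iff]
      tauto
    rw [Finset.sum_eq_zero, ← Finset.mul_sum] at key
    · have h2 : ((t : ℂ) + 2) ≠ 0 := by
        have : ((t + 2 : ℕ) : ℂ) ≠ 0 := Nat.cast_ne_zero.2 (by omega)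
        push_cast at this; exact this
      exact (mul_eq_zero.1 key.symm).resolve_left h2
    · intro x hx
      apply ih
      rw [card_insert_of_notMem (by simpa using hx)]; omega

/-- Inclusion–exclusion: for `f ∈ ker d` on `i`-sets, the sums of `f` over the sets inside `X` and
over the sets disjoint from `X` agree up to the sign `(-1)^i`. -/
lemma zetaT_compl {i : ℕ} {f : Finset (Fin n) → ℂ} (hf : ∀ s, s.card ≠ i → f s = 0)
    (hd : dR n f = 0) (X : Finset (Fin n)) :
    zetaT n f Xᶜ = (-1) ^ i * zetaT n f X := by
  have h1 : ∀ Y : Finset (Fin n), (∑ S ∈ (X ∩ Y).powerset, (-1 : ℂ) ^ S.card) =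
      if Y ⊆ Xᶜ then 1 else 0 := by
    intro Y
    have := Finset.sum_powerset_neg_one_pow_card (x := X ∩ Y)
    have h2 : (Y ⊆ Xᶜ) ↔ X ∩ Y = ∅ := by
      rw [← disjoint_iff_inter_eq_empty, subset_compl_comm, subset_compl_iff_disjoint_right]
    simp only [h2]
    exact_mod_cast this
  have h3 : zetaT n f Xᶜ = ∑ Y, ∑ S ∈ (X ∩ Y).powerset, (-1 : ℂ) ^ S.card * f Y := by
    have : ∀ Y ∈ (univ : Finset (Finset (Fin n))),
        ∑ S ∈ (X ∩ Y).powerset, (-1 : ℂ) ^ S.card * f Y = if Y ⊆ Xᶜ then f Y else 0 := by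
      intro Y _
      rw [← Finset.sum_mul, h1]; split_ifs <;> simp
    rw [Finset.sum_congr rfl this, ← Finset.sum_filter, zetaT]
    refine Finset.sum_congr ?_ fun _ _ => rfl
    ext Y; simp
  have h4 : ∑ Y, ∑ S ∈ (X ∩ Y).powerset, (-1 : ℂ) ^ S.card * f Y =
      ∑ S ∈ X.powerset, ∑ Y ∈ univ.filter (fun Y => S ⊆ Y), (-1 : ℂ) ^ S.card * f Y := by
    refine Finset.sum_comm' ?_
    intro Y S
    simp only [mem_univ, mem_powerset, true_and, mem_filter, subset_inter_iff]
    tauto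
  rw [h3, h4, zetaT, Finset.mul_sum]
  refine Finset.sum_congr rfl fun S hS => ?_
  rw [← Finset.mul_sum]
  rcases lt_trichotomy S.card i with h | h | h
  · rw [sum_superset hf hd (i - S.card - 1) S (by omega), hf S (by omega)]; simp
  · rw [h, Finset.sum_eq_single S]
    · intro Y hY hne
      refine hf Y fun hc => hne ?_
      exact (eq_of_subset_of_card_le (mem_filter.1 hY).2 (by omega)).symm
    · intro hS'; simp at hS'
  · rw [hf S (by omega), Finset.sum_eq_zero]; · simp
    intro Y hY
    have := card_le_card (mem_filter.1 hY).2
    exact hf Y (by omega)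

lemma zetaT_inter {f : Finset (Fin n) → ℂ} {A : Finset (Fin n)}
    (hA : ∀ s, ¬ s ⊆ A → f s = 0) (X : Finset (Fin n)) : zetaT n f X = zetaT n f (X ∩ A) := by
  symm
  refine Finset.sum_subset (powerset_mono.2 inter_subset_left) ?_
  intro S hS hS'
  refine hA S fun h => hS' ?_
  rw [mem_powerset] at hS ⊢
  exact subset_inter hS h

/-- `R_q f = 0` for `f ∈ S^{|A|-i,i}(A)` and `q > |A| - 2i`. -/
lemma zetaT_of_card_gt {i : ℕ} {f : Finset (Fin n) → ℂ} {A : Finset (Fin n)}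
    (hf : ∀ s, s.card ≠ i → f s = 0) (hA : ∀ s, ¬ s ⊆ A → f s = 0)
    (hd : dR n f = 0) {X : Finset (Fin n)} (hXA : X ⊆ A) (hX : A.card < X.card + i) :
    zetaT n f X = 0 := by
  have h := zetaT_compl hf hd X
  have h0 : zetaT n f Xᶜ = 0 := by
    rw [zetaT_inter hA]
    apply zetaT_of_card_lt hf
    have : Xᶜ ∩ A = A \ X := by ext; simp [and_comm]
    rw [this, card_sdiff_of_subset hXA]
    have := card_le_card hXA
    omega
  rw [h0] at h
  simpa using h.symm

/-- The commutation relation `d R_q f = (|A| - 2i - q + 1) R_{q-1} f` for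
`f ∈ S^{|A|-i,i}(A)`, in terms of the zeta transform. -/
lemma sum_zetaT_insert {i : ℕ} {f : Finset (Fin n) → ℂ} {A : Finset (Fin n)}
    (hf : ∀ s, s.card ≠ i → f s = 0) (hA : ∀ s, ¬ s ⊆ A → f s = 0)
    (hd : dR n f = 0) {U : Finset (Fin n)} (hU : U ⊆ A) :
    ∑ x ∈ A \ U, zetaT n f (insert x U) = ((A.card : ℂ) - i - U.card) * zetaT n f U := by
  have h1 : ∀ x ∈ A \ U, zetaT n f (insert x U) =
      zetaT n f U + ∑ S ∈ U.powerset, f (insert x S) := by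
    intro x hx
    rw [zetaT, sum_powerset_insert (mem_sdiff.1 hx).2, zetaT]
  have h2 : ∀ S ∈ U.powerset, ∑ x ∈ A \ U, f (insert x S) = - ∑ x ∈ U \ S, f (insert x S) := by
    intro S hS
    rw [mem_powerset] at hS
    have h0 : dR n f S = 0 := by rw [hd]; rfl
    have h3 : ∑ x ∈ A \ S, f (insert x S) = dR n f S := by
      refine Finset.sum_subset ?_ ?_
      · intro x hx; simpa using (mem_sdiff.1 hx).2
      · intro x hx hx'
        refine hA _ fun h => hx' ?_
        exact mem_sdiff.2 ⟨h (mem_insert_self _ _), by simpa using hx⟩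
    have h4 : A \ S = (A \ U) ∪ (U \ S) := by
      ext x; simp only [mem_sdiff, mem_union]
      have := @hS x; have := @hU x; tauto
    have h5 : Disjoint (A \ U) (U \ S) := by
      rw [disjoint_left]; intro x hx hx'; simp only [mem_sdiff] at hx hx'; tauto
    rw [h4, sum_union h5, h0] at h3
    exact eq_neg_of_add_eq_zero_left h3
  have h6 : ∑ S ∈ U.powerset, ∑ x ∈ U \ S, f (insert x S) = (i : ℂ) * zetaT n f U := by
    have : ∀ Y ∈ U.powerset, (i : ℂ) * f Y = ∑ x ∈ Y, f Y := by
      intro Y _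
      rw [sum_const, nsmul_eq_mul]
      by_cases hc : Y.card = i
      · rw [hc]
      · rw [hf Y hc]; simp
    rw [zetaT, Finset.mul_sum, Finset.sum_congr rfl this, Finset.sum_sigma', Finset.sum_sigma']
    refine Finset.sum_nbij' (fun p => ⟨insert p.2 p.1, p.2⟩) (fun p => ⟨p.1.erase p.2, p.2⟩)
      ?_ ?_ ?_ ?_ ?_
    · rintro ⟨S, x⟩ h
      simp only [mem_sigma, mem_powerset, mem_sdiff] at h ⊢
      exact ⟨insert_subset h.2.1 h.1, mem_insert_self _ _⟩
    · rintro ⟨S, x⟩ h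
      simp only [mem_sigma, mem_powerset, mem_sdiff] at h ⊢
      exact ⟨(erase_subset _ _).trans h.1, h.1 h.2, notMem_erase _ _⟩
    · rintro ⟨S, x⟩ h
      simp only [mem_sigma, mem_powerset, mem_sdiff] at h ⊢
      simp [erase_insert h.2.2]
    · rintro ⟨S, x⟩ h
      simp only [mem_sigma, mem_powerset] at h ⊢
      simp [insert_erase h.2]
    · rintro ⟨S, x⟩ h; rfl
  rw [Finset.sum_congr rfl h1, sum_add_distrib, sum_const, nsmul_eq_mul, Finset.sum_comm,
    Finset.sum_congr rfl h2, sum_neg_distrib, h6, card_sdiff_of_subset hU,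
    Nat.cast_sub (card_le_card hU)]
  ring

/-- `R_p R_q f = C(p+q, p) R_{p+q} f`, in terms of the zeta transform. -/
lemma sum_zetaT_card {i : ℕ} {f : Finset (Fin n) → ℂ}
    (hf : ∀ s, s.card ≠ i → f s = 0) (X : Finset (Fin n)) (q : ℕ) :
    ∑ V ∈ X.powerset, (if V.card = i + q then zetaT n f V else 0) =
      ((X.card - i).choose q : ℂ) * zetaT n f X := by
  rw [← Finset.sum_filter]
  unfold zetaT
  have h1 : ∑ V ∈ X.powerset.filter (fun V => V.card = i + q), ∑ S ∈ V.powerset, f S =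
      ∑ S ∈ X.powerset, ∑ V ∈ X.powerset.filter (fun V => V.card = i + q ∧ S ⊆ V), f S := by
    refine Finset.sum_comm' ?_
    intro V S
    simp only [mem_filter, mem_powerset]
    constructor
    · rintro ⟨⟨a, b⟩, c⟩; exact ⟨⟨a, b, c⟩, c.trans a⟩
    · rintro ⟨⟨a, b, c⟩, _⟩; exact ⟨⟨a, b⟩, c⟩
  rw [h1, Finset.mul_sum]
  refine Finset.sum_congr rfl fun S hS => ?_
  rw [sum_const, nsmul_eq_mul]
  rw [mem_powerset] at hS
  by_cases hc : S.card = i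
  · congr 2
    rw [← hc, ← card_sdiff_of_subset hS, ← card_powersetCard]
    refine Finset.card_nbij' (fun V => V \ S) (fun W => W ∪ S) ?_ ?_ ?_ ?_
    · intro V hV
      simp only [coe_filter, mem_powerset, Set.mem_ofPred_eq, mem_coe, mem_powersetCard] at hV ⊢
      exact ⟨sdiff_subset_sdiff hV.1 subset_rfl, by rw [card_sdiff_of_subset hV.2.2]; omega⟩
    · intro W hW
      simp only [coe_filter, mem_powerset, Set.mem_ofPred_eq, mem_coe, mem_powersetCard] at hW ⊢
      have hdis : Disjoint W S := disjoint_of_subset_left hW.1 sdiff_disjoint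
      exact ⟨union_subset (hW.1.trans sdiff_subset) hS,
        by rw [card_union_of_disjoint hdis]; omega, subset_union_right⟩
    · intro V hV
      simp only [coe_filter, mem_powerset, Set.mem_ofPred_eq] at hV
      exact sdiff_union_of_subset hV.2.2
    · intro W hW
      simp only [mem_coe, mem_powersetCard] at hW
      have hdis : Disjoint W S := disjoint_of_subset_left hW.1 sdiff_disjoint
      exact union_sdiff_cancel_right hdis
  · rw [hf S hc]; simp

/-! ### Splitting subsets along `{1,…,n} = A ∪ B` -/

lemma sum_powerset_split {A B : Finset (Fin n)} (hAB : Disjoint A B) (hU : A ∪ B = univ)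
    (g g' : Finset (Fin n) → ℂ) (Z : Finset (Fin n)) :
    ∑ W ∈ Z.powerset, g (W ∩ A) * g' (W ∩ B) =
      (∑ U ∈ (Z ∩ A).powerset, g U) * ∑ V ∈ (Z ∩ B).powerset, g' V := by
  rw [Finset.sum_mul_sum, ← Finset.sum_product']
  have hdA : ∀ x, x ∈ A → x ∉ B := fun x h => disjoint_left.1 hAB h
  have hun : ∀ x, x ∈ A ∨ x ∈ B := fun x => by rw [← mem_union, hU]; simp
  refine Finset.sum_nbij' (fun W => (W ∩ A, W ∩ B)) (fun p => p.1 ∪ p.2) ?_ ?_ ?_ ?_ ?_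
  · intro W hW
    simp only [mem_powerset, mem_product] at hW ⊢
    exact ⟨inter_subset_inter_right hW, inter_subset_inter_right hW⟩
  · rintro ⟨U, V⟩ h
    simp only [mem_powerset, mem_product] at h ⊢
    exact union_subset (h.1.trans inter_subset_left) (h.2.trans inter_subset_left)
  · intro W hW
    show W ∩ A ∪ W ∩ B = W
    rw [← inter_union_distrib_left, hU, inter_univ]
  · rintro ⟨U, V⟩ h
    simp only [mem_powerset, mem_product, subset_inter_iff] at h
    ext x <;> simp only [mem_inter, mem_union] <;>
      · have h1 := @h.1.2 x; have h2 := @h.2.2 x; have h3 := hdA x; tauto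
  · intro W hW; rfl

lemma card_split {A B : Finset (Fin n)} (hAB : Disjoint A B) (hU : A ∪ B = univ)
    (Z : Finset (Fin n)) : Z.card = (Z ∩ A).card + (Z ∩ B).card := by
  rw [← card_union_of_disjoint (disjoint_of_subset_left inter_subset_right
    (disjoint_of_subset_right inter_subset_right hAB)), ← inter_union_distrib_left, hU, inter_univ]

end zeta

lemma block_disjoint (n h : ℕ) : Disjoint (block n 0 h) (block n h (n - h)) := by
  rw [disjoint_left]; intro x hx hx'
  simp only [block, mem_filter] at hx hx'; omega

lemma block_union (n h : ℕ) : block n 0 h ∪ block n h (n - h) = univ := by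
  ext x
  have := x.2
  simp only [block, mem_union, mem_filter, mem_univ, true_and, iff_true]; omega

lemma card_block (n o a : ℕ) (hoa : o + a ≤ n) : (block n o a).card = a := by
  have : (block n o a).map Fin.valEmbedding = Ico o (o + a) := by
    ext x
    simp only [block, mem_map, mem_filter, mem_univ, true_and, Fin.valEmbedding_apply, mem_Ico]
    constructor
    · rintro ⟨y, hy, rfl⟩; exact hy
    · intro hx; exact ⟨⟨x, by omega⟩, hx, rfl⟩
  rw [← card_map Fin.valEmbedding, this]; simp

/-! ### A closed form for `T_r(φ ⊗ ψ)` -/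

/-- Outside the range of summation in `T_r` the zeta transforms vanish, so no range condition
remains; the truncated subtractions are harmless for the same reason. -/
lemma Tmap_eq (n h i j k r : ℕ) (hh : h ≤ n) (hi : 2 * i ≤ h) (hj : 2 * j ≤ n - h)
    (hir : i ≤ r) (φ ψ : Finset (Fin n) → ℂ)
    (hφsupp : ∀ s : Finset (Fin n), ¬(s ⊆ block n 0 h ∧ s.card = i) → φ s = 0)
    (hφd : dR n φ = 0)
    (hψsupp : ∀ s : Finset (Fin n), ¬(s ⊆ block n h (n - h) ∧ s.card = j) → ψ s = 0)
    (hψd : dR n ψ = 0) (Z : Finset (Fin n)) :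
    Tmap n h i j k φ ψ r Z = if Z.card = r then
      (hahnF (k - i - j) ((n : ℤ) - h - 2 * j) ((h : ℤ) - 2 * i)
        ((Z ∩ block n h (n - h)).card - j) ((Z ∩ block n 0 h).card - i) : ℂ) *
        (zetaT n φ (Z ∩ block n 0 h) * zetaT n ψ (Z ∩ block n h (n - h))) else 0 := by
  have hφc : ∀ s : Finset (Fin n), s.card ≠ i → φ s = 0 := fun s hs => hφsupp s fun h => hs h.2
  have hψc : ∀ s : Finset (Fin n), s.card ≠ j → ψ s = 0 := fun s hs => hψsupp s fun h => hs h.2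
  have hφA : ∀ s : Finset (Fin n), ¬ s ⊆ block n 0 h → φ s = 0 :=
    fun s hs => hφsupp s fun h => hs h.1
  have hψB : ∀ s : Finset (Fin n), ¬ s ⊆ block n h (n - h) → ψ s = 0 :=
    fun s hs => hψsupp s fun h => hs h.1
  have hcA := card_block n 0 h (by omega)
  have hcB := card_block n h (n - h) (by omega)
  have hcZ := card_split (block_disjoint n h) (block_union n h) Z
  have hZA : Z ∩ block n 0 h ⊆ block n 0 h := inter_subset_right
  have hZB : Z ∩ block n h (n - h) ⊆ block n h (n - h) := inter_subset_right
  generalize hXA : Z ∩ block n 0 h = X at *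
  generalize hYB : Z ∩ block n h (n - h) = Y at *
  unfold Tmap tens
  simp only [hXA, hYB, RT_eq_zetaT hφc, RT_eq_zetaT hψc]
  by_cases hP : zetaT n φ X * zetaT n ψ Y = 0
  · rw [hP, mul_zero, ite_self]
    refine Finset.sum_eq_zero fun w hw => ?_
    split_ifs <;> simp [hP]
  · obtain ⟨hP1, hP2⟩ := mul_ne_zero_iff.1 hP
    have b1 : i ≤ X.card := by
      by_contra hlt; exact hP1 (zetaT_of_card_lt hφc (by omega))
    have b2 : j ≤ Y.card := by
      by_contra hlt; exact hP2 (zetaT_of_card_lt hψc (by omega))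
    have b3 : X.card + i ≤ h := by
      by_contra hlt; exact hP1 (zetaT_of_card_gt hφc hφA hφd hZA (by omega))
    have b4 : Y.card + j ≤ n - h := by
      by_contra hlt; exact hP2 (zetaT_of_card_gt hψc hψB hψd hZB (by omega))
    split_ifs with hr
    · rw [Finset.sum_eq_single Y.card]
      · rw [if_pos (by omega), if_pos (by omega), ← hahnE_eq_hahnF]
        push_cast [Nat.cast_sub b1, Nat.cast_sub b2]
        congr 2
        congr 1
        have : (r : ℤ) = X.card + Y.card := by rw [← hr, hcZ]; push_cast; rfl
        rw [this]; ring
      · intro w hw hne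
        simp only [mem_Icc] at hw
        rw [if_neg (c := Y.card = _) (by omega)]; simp
      · intro hw
        exfalso; apply hw; simp only [mem_Icc]; omega
    · refine Finset.sum_eq_zero fun w hw => ?_
      simp only [mem_Icc] at hw
      by_cases hY : Y.card = w - j + j
      · rw [if_neg (c := X.card = _) (by omega)]; simp
      · rw [if_neg hY]; simp

/-- Theorem 2.6, first part: `T_k(φ⊗ψ) ∈ S^{n-k,k}` and `T_m(φ⊗ψ) = R_{m-k} T_k(φ⊗ψ)`;
in particular `T_m(φ⊗ψ) ∈ R_{m-k}(S^{n-k,k}) ⊆ M^{n-m,m}`. -/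
theorem stmt8 (n h i j k m : ℕ) (hn : 1 ≤ n) (hh : h ≤ n) (hm : m ≤ n)
    (hk1 : k ≤ n - m) (hk2 : k ≤ m) (hi : 2 * i ≤ h) (hj : 2 * j ≤ n - h)
    (hc1 : (k : ℤ) - h ≤ (j : ℤ) - i) (hc2 : (j : ℤ) - i ≤ (n : ℤ) - h - k)
    (hc3 : i + j ≤ k)
    (φ ψ : Finset (Fin n) → ℂ)
    (hφsupp : ∀ s : Finset (Fin n), ¬(s ⊆ block n 0 h ∧ s.card = i) → φ s = 0)
    (hφd : dR n φ = 0)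
    (hψsupp : ∀ s : Finset (Fin n), ¬(s ⊆ block n h (n - h) ∧ s.card = j) → ψ s = 0)
    (hψd : dR n ψ = 0) :
    (∀ s : Finset (Fin n), s.card ≠ k → Tmap n h i j k φ ψ k s = 0) ∧
    dR n (Tmap n h i j k φ ψ k) = 0 ∧
    Tmap n h i j k φ ψ m = RT n (m - k) (Tmap n h i j k φ ψ k) := by
  have hT := fun r hir => Tmap_eq n h i j k r hh hi hj hir φ ψ hφsupp hφd hψsupp hψd
  have hφc : ∀ s : Finset (Fin n), s.card ≠ i → φ s = 0 := fun s hs => hφsupp s fun h => hs h.2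
  have hψc : ∀ s : Finset (Fin n), s.card ≠ j → ψ s = 0 := fun s hs => hψsupp s fun h => hs h.2
  have hφA : ∀ s : Finset (Fin n), ¬ s ⊆ block n 0 h → φ s = 0 :=
    fun s hs => hφsupp s fun h => hs h.1
  have hψB : ∀ s : Finset (Fin n), ¬ s ⊆ block n h (n - h) → ψ s = 0 :=
    fun s hs => hψsupp s fun h => hs h.1
  have hsupp : ∀ s : Finset (Fin n), s.card ≠ k → Tmap n h i j k φ ψ k s = 0 := by
    intro s hs
    rw [hT k (by omega), if_neg hs]
  have hcA := card_block n 0 h (by omega)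
  have hcB := card_block n h (n - h) (by omega)
  have hdis := block_disjoint n h
  have hun := block_union n h
  generalize block n 0 h = A at *
  generalize block n h (n - h) = B at *
  obtain ⟨K, hK⟩ : ∃ K, k = i + j + K := ⟨k - i - j, by omega⟩
  have hK' : k - i - j = K := by omega
  simp only [hK'] at hT
  have hdA : ∀ x, x ∈ A → x ∉ B := fun x h => disjoint_left.1 hdis h
  have hmem : ∀ x, x ∈ A ∨ x ∈ B := fun x => by rw [← mem_union, hun]; simp
  generalize ha : (n : ℤ) - h - 2 * j = a at *
  generalize hb : (h : ℤ) - 2 * i = b at *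
  refine ⟨hsupp, ?_, ?_⟩
  · funext Y
    show ∑ x ∈ Yᶜ, Tmap n h i j k φ ψ k (insert x Y) = 0
    by_cases hY : Y.card + 1 = k
    swap
    · refine Finset.sum_eq_zero fun x hx => hsupp _ ?_
      rwa [card_insert_of_notMem (by simpa using hx)]
    have hsplit : Yᶜ = (A \ (Y ∩ A)) ∪ (B \ (Y ∩ B)) := by
      ext x; have := hmem x; have := hdA x
      simp only [mem_compl, mem_union, mem_sdiff, mem_inter]; tauto
    have hdis' : Disjoint (A \ (Y ∩ A)) (B \ (Y ∩ B)) :=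
      disjoint_of_subset_left sdiff_subset (disjoint_of_subset_right sdiff_subset hdis)
    have eA : ∀ x ∈ A \ (Y ∩ A), Tmap n h i j k φ ψ k (insert x Y) =
        (hahnF K a b ((Y ∩ B).card - j) ((Y ∩ A).card + 1 - i) : ℂ) * zetaT n ψ (Y ∩ B) *
          zetaT n φ (insert x (Y ∩ A)) := by
      intro x hx
      simp only [mem_sdiff, mem_inter, not_and] at hx
      have hxY : x ∉ Y := fun h => hx.2 h hx.1
      rw [hT k (by omega), if_pos (by rw [card_insert_of_notMem hxY, hY]), insert_inter_of_mem hx.1,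
        insert_inter_of_notMem (hdA x hx.1), card_insert_of_notMem (by simp [hxY])]
      ring
    have eB : ∀ x ∈ B \ (Y ∩ B), Tmap n h i j k φ ψ k (insert x Y) =
        (hahnF K a b ((Y ∩ B).card + 1 - j) ((Y ∩ A).card - i) : ℂ) * zetaT n φ (Y ∩ A) *
          zetaT n ψ (insert x (Y ∩ B)) := by
      intro x hx
      simp only [mem_sdiff, mem_inter, not_and] at hx
      have hxY : x ∉ Y := fun h => hx.2 h hx.1
      rw [hT k (by omega), if_pos (by rw [card_insert_of_notMem hxY, hY]), insert_inter_of_mem hx.1,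
        insert_inter_of_notMem (fun h => hdA x h hx.1), card_insert_of_notMem (by simp [hxY])]
      ring
    rw [hsplit, sum_union hdis', Finset.sum_congr rfl eA, Finset.sum_congr rfl eB,
      ← Finset.mul_sum, ← Finset.mul_sum, sum_zetaT_insert hφc hφA hφd inter_subset_right,
      sum_zetaT_insert hψc hψB hψd inter_subset_right, hcA, hcB]
    by_cases b1 : (Y ∩ A).card < i
    · rw [zetaT_of_card_lt hφc b1]; simp
    by_cases b2 : (Y ∩ B).card < j
    · rw [zetaT_of_card_lt hψc b2]; simp
    have hcY := card_split hdis hun Y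
    obtain ⟨y, hy⟩ : ∃ y, (Y ∩ A).card = i + y := ⟨_, (Nat.add_sub_of_le (not_lt.1 b1)).symm⟩
    obtain ⟨x, hx⟩ : ∃ x, (Y ∩ B).card = j + x := ⟨_, (Nat.add_sub_of_le (not_lt.1 b2)).symm⟩
    rw [hy, hx, show j + x - j = x by omega, show i + y + 1 - i = y + 1 by omega,
      show j + x + 1 - j = x + 1 by omega, show i + y - i = y by omega,
      hahnF_diag a b (by omega), hahnF_diag a b (by omega), Nat.cast_sub hh]
    have hrec := congrArg (Int.cast : ℤ → ℂ)
      (hahnCoef_rec (K := K) (x := x) (y := y) a b (by omega))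
    rw [← ha, ← hb] at hrec ⊢
    push_cast at hrec ⊢
    linear_combination (zetaT n φ (Y ∩ A) * zetaT n ψ (Y ∩ B)) * hrec
  · funext Z
    rw [hT m (by omega), RT_eq_zetaT hsupp, show m - k + k = m by omega]
    split_ifs with hZ
    swap
    · rfl
    have hW : ∀ W ∈ Z.powerset, Tmap n h i j k φ ψ k W = ∑ v ∈ range (K + 1),
        (hahnCoef K a b v : ℂ) *
          ((if (W ∩ A).card = i + (K - v) then zetaT n φ (W ∩ A) else 0) *
            (if (W ∩ B).card = j + v then zetaT n ψ (W ∩ B) else 0)) := by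
      intro W _
      have hcW := card_split hdis hun W
      rw [hT k (by omega)]
      by_cases b1 : (W ∩ A).card < i
      · rw [zetaT_of_card_lt hφc b1]; simp
      by_cases b2 : (W ∩ B).card < j
      · rw [zetaT_of_card_lt hψc b2]; simp
      split_ifs with hk
      · rw [hahnF_diag a b (by omega), Finset.sum_eq_single ((W ∩ B).card - j)]
        · rw [if_pos (by omega), if_pos (by omega)]
        · intro v hv hne
          rw [if_neg (c := (W ∩ B).card = _) (by omega)]; simp
        · intro hv; simp only [mem_range] at hv; omega
      · symm
        refine Finset.sum_eq_zero fun v hv => ?_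
        simp only [mem_range] at hv
        by_cases hB : (W ∩ B).card = j + v
        · rw [if_neg (c := (W ∩ A).card = _) (by omega)]; simp
        · rw [if_neg hB]; simp
    rw [zetaT.eq_def n (Tmap n h i j k φ ψ k), Finset.sum_congr rfl hW, Finset.sum_comm, hahnF]
    push_cast
    rw [Finset.sum_mul]
    refine Finset.sum_congr rfl fun v hv => ?_
    rw [← Finset.mul_sum, sum_powerset_split hdis hun
      (fun U => if U.card = i + (K - v) then zetaT n φ U else 0)
      (fun V => if V.card = j + v then zetaT n ψ V else 0),
      sum_zetaT_card hφc, sum_zetaT_card hψc]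
    ring
end
end
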